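/- arXiv:1311.2683 — 2 statements merged into one kernel-verified Lean document; each statement's English description precedes it below -/
import Mathlib

section
/- Let A₁, …, A_p be finite algebras each having trivial strongly solvable radical (i.e., no type-1 atom in its congruence lattice). Then every subdirect product B ≤_s A₁ × ⋯ × A_p has trivial strongly solvable radical. -/
/-!
Let `θ` be a strongly abelian atom of `Con B`, for a subdirect product `B`. Since `θ ≠ ⊥`, some
projection `π : B → A i` does not collapse `θ`; as `θ` is an atom, `θ ⊓ ker π = ⊥`. The image of `θ`
under `π` generates a nontrivial congruence `R` of `A i`; let `ψ ≤ R` be an atom. By assumption `ψ`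
is not strongly abelian, and this is brought to a contradiction as follows.

* `exists_minimal_idem`: there is an idempotent unary polynomial `e` of `A i` whose range `U` is a
  `(⊥, ψ)`-minimal set, so that a unary polynomial mapping `U` to `U` is a permutation of `U` as
  soon as it does not collapse `ψ` on `U` (`exists_iterate_inverse`).
* `stronglyAbelian_of_unary`: if no `U`-valued binary polynomial depends on both of its variables
  along `ψ`-pairs of `U`, then every `U`-valued polynomial depends on at most one variable along
  `ψ`, because `ψ` is generated by its pairs inside `U`; hence `ψ` is strongly abelian.
* `exists_unit`: otherwise, composing with inverses of permutations of `U` produces a binary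
  polynomial `f` and `c ∈ U`, not alone in its trace, with `f (c, u) = u = f (u, c)` on `U`.
* `image_step_eq`: if `x θ y` are mapped by `π` to `c` and `v ∈ U`, then a lift `F` of `f` to `B`
  satisfies `F (x, y) = F (y, x)` (their images agree, and `θ ⊓ ker π = ⊥`), so strong abelianness
  gives `F (x, x) = F (y, x)`, that is, `c = v`. So no `θ`-path issues from `c` inside `U`, although
  `c` is `ψ`-related, hence `R`-related, to another element of `U`.
-/

/-- A purely functional first-order signature. -/
structure Signature where
  ops : Type
  arity : ops → ℕ

/-- An algebra for a signature: an interpretation of each operation symbol. -/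
structure UAlg (σ : Signature) (A : Type) where
  interp : ∀ o : σ.ops, (Fin (σ.arity o) → A) → A

/-- Terms in `n` variables over a signature. -/
inductive Term (σ : Signature) (n : ℕ) : Type
  | var : Fin n → Term σ n
  | op : (o : σ.ops) → (Fin (σ.arity o) → Term σ n) → Term σ n

/-- Evaluation of a term at a tuple. -/
def Term.eval {σ : Signature} {A : Type} (Alg : UAlg σ A) {n : ℕ} :
    Term σ n → (Fin n → A) → A
  | .var i, v => v i
  | .op o ts, v => Alg.interp o fun j => (ts j).eval Alg v

/-- A congruence: an equivalence relation compatible with all operations. -/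
def IsCongruence {σ : Signature} {A : Type} (Alg : UAlg σ A) (r : A → A → Prop) : Prop :=
  Equivalence r ∧ ∀ (o : σ.ops) (x y : Fin (σ.arity o) → A),
    (∀ i, r (x i) (y i)) → r (Alg.interp o x) (Alg.interp o y)

/-- A `k`-ary polynomial operation: a term operation with parameters. -/
def IsPolynomial {σ : Signature} {A : Type} (Alg : UAlg σ A) {k : ℕ}
    (f : (Fin k → A) → A) : Prop :=
  ∃ (n : ℕ) (t : Term σ (k + n)) (params : Fin n → A),
    ∀ x : Fin k → A, f x = t.eval Alg (Fin.append x params)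

/-- A unary polynomial operation. -/
def IsUnaryPolynomial {σ : Signature} {A : Type} (Alg : UAlg σ A) (f : A → A) : Prop :=
  IsPolynomial Alg (k := 1) fun x => f (x 0)

/-- The term condition TermCond(α, β; γ). -/
def TermCond {σ : Signature} {A : Type} (Alg : UAlg σ A) (α β γ : A → A → Prop) : Prop :=
  ∀ (n m : ℕ) (t : Term σ (n + m)) (a₁ a₂ : Fin n → A) (b₁ b₂ : Fin m → A),
    (∀ i, α (a₁ i) (a₂ i)) → (∀ i, β (b₁ i) (b₂ i)) →
    γ (t.eval Alg (Fin.append a₁ b₁)) (t.eval Alg (Fin.append a₁ b₂)) →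
    γ (t.eval Alg (Fin.append a₂ b₁)) (t.eval Alg (Fin.append a₂ b₂))

/-- β is strongly abelian over γ. -/
def StronglyAbelianOver {σ : Signature} {A : Type} (Alg : UAlg σ A)
    (β γ : A → A → Prop) : Prop :=
  ∀ (n m : ℕ) (t : Term σ (n + m)) (a₁ a₂ : Fin n → A) (b₁ b₂ b₃ : Fin m → A),
    (∀ i, β (a₁ i) (a₂ i)) → (∀ i, β (b₁ i) (b₂ i)) → (∀ i, β (b₂ i) (b₃ i)) →
    γ (t.eval Alg (Fin.append a₁ b₁)) (t.eval Alg (Fin.append a₂ b₂)) →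
    γ (t.eval Alg (Fin.append a₁ b₃)) (t.eval Alg (Fin.append a₂ b₃))

/-- The least congruence containing a binary relation. -/
def congClosure {σ : Signature} {A : Type} (Alg : UAlg σ A) (R : A → A → Prop) :
    A → A → Prop :=
  fun a b => ∀ r, IsCongruence Alg r → (∀ x y, R x y → r x y) → r a b

/-- A subset closed under the operations. -/
def IsSubalgebra {σ : Signature} {A : Type} (Alg : UAlg σ A) (s : Set A) : Prop :=
  ∀ (o : σ.ops) (x : Fin (σ.arity o) → A), (∀ j, x j ∈ s) → Alg.interp o x ∈ s

/-- The power algebra `A^I`. -/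
def UAlg.pow {σ : Signature} {A : Type} (Alg : UAlg σ A) (I : Type) :
    UAlg σ (I → A) :=
  ⟨fun o x i => Alg.interp o fun j => x j i⟩

/-- The product of a family of algebras. -/
def UAlg.pi {σ : Signature} {ι : Type} {A : ι → Type} (Alg : ∀ i, UAlg σ (A i)) :
    UAlg σ (∀ i, A i) :=
  ⟨fun o x i => (Alg i).interp o fun j => x j i⟩

/-- The binary product of two algebras. -/
def UAlg.prod2 {σ : Signature} {A B : Type} (AlgA : UAlg σ A) (AlgB : UAlg σ B) :
    UAlg σ (A × B) :=
  ⟨fun o x => (AlgA.interp o fun j => (x j).1, AlgB.interp o fun j => (x j).2)⟩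

/-- The algebra structure on a subalgebra. -/
def UAlg.sub {σ : Signature} {A : Type} (Alg : UAlg σ A) (s : Set A)
    (hs : IsSubalgebra Alg s) : UAlg σ s :=
  ⟨fun o x => ⟨Alg.interp o fun j => (x j : A), hs o _ fun j => (x j).2⟩⟩

/-- Homomorphisms of algebras. -/
def IsHom {σ : Signature} {A B : Type} (AlgA : UAlg σ A) (AlgB : UAlg σ B)
    (f : A → B) : Prop :=
  ∀ (o : σ.ops) (x : Fin (σ.arity o) → A), f (AlgA.interp o x) = AlgB.interp o (f ∘ x)

/-- An idempotent unary polynomial. -/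
def IsIdempotentPoly {σ : Signature} {A : Type} (Alg : UAlg σ A) (e : A → A) : Prop :=
  IsUnaryPolynomial Alg e ∧ ∀ x, e (e x) = e x

/-- A (⊥, δ)-minimal set. -/
def IsMinimalSet {σ : Signature} {A : Type} (Alg : UAlg σ A) (δ : A → A → Prop)
    (U : Set A) : Prop :=
  (∃ e, IsIdempotentPoly Alg e ∧ U = Set.range e ∧ ∃ a b, δ a b ∧ e a ≠ e b) ∧
  ∀ e', IsIdempotentPoly Alg e' → Set.range e' ⊆ U → (∃ a b, δ a b ∧ e' a ≠ e' b) →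
    Set.range e' = U

/-- μ is an atom of the congruence lattice. -/
def IsAtomCong {σ : Signature} {A : Type} (Alg : UAlg σ A) (μ : A → A → Prop) : Prop :=
  IsCongruence Alg μ ∧ μ ≠ (fun a b => a = b) ∧
  ∀ θ, IsCongruence Alg θ → (∀ a b, θ a b → μ a b) → θ = (fun a b => a = b) ∨ θ = μ

/-- A (⊥, μ)-trace in a minimal set U. -/
def IsTrace {A : Type} (μ : A → A → Prop) (U N : Set A) : Prop :=
  (∃ a ∈ U, N = {x ∈ U | μ x a}) ∧ ∃ x ∈ N, ∃ y ∈ N, x ≠ y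

/-- The body of a minimal set: the union of its traces. -/
def Body {A : Type} (μ : A → A → Prop) (U : Set A) : Set A :=
  {x | ∃ N, IsTrace μ U N ∧ x ∈ N}

/-- Polynomial permutations of U (as functions A → A which are bijective on U). -/
def PolPermFun {σ : Signature} {A : Type} (Alg : UAlg σ A) (U : Set A) : Set (A → A) :=
  { p | IsUnaryPolynomial Alg p ∧ Set.BijOn p U U }

/-- Subdirect irreducibility: there is a pair contained in every nontrivial congruence. -/
def IsSI {σ : Signature} {B : Type} (Alg : UAlg σ B) : Prop :=
  ∃ a b : B, a ≠ b ∧ ∀ θ, IsCongruence Alg θ → θ ≠ (fun x y => x = y) → θ a b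

/-- The subalgebra generated by a set. -/
def genSub {σ : Signature} {B : Type} (Alg : UAlg σ B) (s : Set B) : Set B :=
  ⋂₀ {t | IsSubalgebra Alg t ∧ s ⊆ t}

/-- A strongly solvable congruence: connected to ⊥ by strongly abelian covers. -/
def IsStronglySolvable {σ : Signature} {A : Type} (Alg : UAlg σ A)
    (s : A → A → Prop) : Prop :=
  ∃ (n : ℕ) (c : Fin (n + 1) → (A → A → Prop)),
    c 0 = (fun a b => a = b) ∧ c (Fin.last n) = s ∧
    (∀ i, IsCongruence Alg (c i)) ∧
    ∀ i : Fin n, (∀ a b, c i.castSucc a b → c i.succ a b) ∧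
      StronglyAbelianOver Alg (c i.succ) (c i.castSucc)

/-- The set of n-ary term operations of an algebra. -/
def TermFun {σ : Signature} {A : Type} (Alg : UAlg σ A) (n : ℕ) :
    Set ((Fin n → A) → A) :=
  { g | ∃ t : Term σ n, g = fun v => t.eval Alg v }

/-- A finite algebra has trivial strongly solvable radical iff no atom of its congruence
lattice is strongly abelian (i.e., no atom has unary type 1). -/
def HasTrivialSSRadical {σ : Signature} {A : Type} (Alg : UAlg σ A) : Prop :=
  ¬ ∃ θ : A → A → Prop, IsAtomCong Alg θ ∧ StronglyAbelianOver Alg θ (fun a b => a = b)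

namespace SSRad

open Function

variable {σ : Signature}

/-! ### Polynomial functions -/

/-- The functions `X → A` generated from those in `G` and the constants by the operations of the
algebra. With `G` the coordinate projections, these are the polynomial operations. -/
inductive Gen {A X : Type} (Alg : UAlg σ A) (G : Set (X → A)) : (X → A) → Prop
  | base (g : X → A) : g ∈ G → Gen Alg G g
  | const (a : A) : Gen Alg G (fun _ => a)
  | op (o : σ.ops) (h : Fin (σ.arity o) → X → A) : (∀ j, Gen Alg G (h j)) →
      Gen Alg G (fun x => Alg.interp o fun j => h j x)

/-- Unary polynomials. -/
abbrev UPol {A : Type} (Alg : UAlg σ A) (p : A → A) : Prop := Gen Alg {id} p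

/-- Binary polynomials, as functions on pairs. -/
abbrev BPol {A : Type} (Alg : UAlg σ A) (f : A × A → A) : Prop :=
  Gen Alg {Prod.fst, Prod.snd} f

section Basic

variable {A : Type} {Alg : UAlg σ A}

lemma Gen.subst {X Y : Type} {G : Set (X → A)} {G' : Set (Y → A)} {f : X → A}
    (hf : Gen Alg G f) (h : Y → X) (hh : ∀ g ∈ G, Gen Alg G' (fun y => g (h y))) :
    Gen Alg G' (fun y => f (h y)) := by
  induction hf with
  | base g hg => exact hh g hg
  | const a => exact .const a
  | op o k _ ih => exact .op o (fun j y => k j (h y)) ih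

lemma UPol.comp {X : Type} {G : Set (X → A)} {p : A → A} {f : X → A}
    (hp : UPol Alg p) (hf : Gen Alg G f) : Gen Alg G (fun x => p (f x)) :=
  Gen.subst hp f (by rintro g rfl; exact hf)

lemma upol_id : UPol Alg (fun x => x) := .base _ rfl

lemma upol_iterate {p : A → A} (hp : UPol Alg p) (k : ℕ) : UPol Alg p^[k] := by
  induction k with
  | zero => exact upol_id
  | succ k ih => exact ih.comp hp

lemma bpol_fst : BPol Alg Prod.fst := .base _ (by simp)
lemma bpol_snd : BPol Alg Prod.snd := .base _ (by simp)

lemma BPol.comp {X : Type} {G : Set (X → A)} {f : A × A → A} (hf : BPol Alg f) {g h : X → A}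
    (hg : Gen Alg G g) (hh : Gen Alg G h) : Gen Alg G (fun x => f (g x, h x)) :=
  Gen.subst hf (fun x => (g x, h x)) (by
    rintro k (rfl | rfl)
    · exact hg
    · exact hh)

lemma gen_eval {X : Type} {G : Set (X → A)} {n : ℕ} (t : Term σ n) (g : Fin n → X → A)
    (hg : ∀ i, Gen Alg G (g i)) : Gen Alg G (fun x => t.eval Alg (fun i => g i x)) := by
  induction t with
  | var i => exact hg i
  | op o ts ih => exact .op o _ ih

lemma Gen.rel {X : Type} {G : Set (X → A)} {f : X → A} (hf : Gen Alg G f)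
    {r : A → A → Prop} (hr : ∀ a, r a a)
    (hop : ∀ (o : σ.ops) (x y : Fin (σ.arity o) → A),
      (∀ i, r (x i) (y i)) → r (Alg.interp o x) (Alg.interp o y))
    {x y : X} (hxy : ∀ g ∈ G, r (g x) (g y)) : r (f x) (f y) := by
  induction hf with
  | base g hg => exact hxy g hg
  | const a => exact hr a
  | op o k _ ih => exact hop o _ _ ih

lemma UPol.cong {p : A → A} (hp : UPol Alg p) {r : A → A → Prop} (hr : IsCongruence Alg r)
    {x y : A} (h : r x y) : r (p x) (p y) :=
  Gen.rel hp hr.1.refl hr.2 (by rintro g rfl; exact h)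

/-- Passing from one tuple to another by changing one coordinate at a time. -/
lemma pi_induct {K : Type} [Fintype K] [DecidableEq K] (P : (K → A) → Prop) (x y : K → A)
    (h0 : P x)
    (hs : ∀ z j, (∀ i, z i = x i ∨ z i = y i) → z j = x j → P z → P (update z j (y j))) :
    P y := by
  have key : ∀ s : Finset K, P (s.piecewise y x) := by
    intro s
    induction s using Finset.induction_on with
    | empty => simpa using h0
    | insert j s hj ih =>
      rw [Finset.piecewise_insert]
      refine hs _ j (fun i => ?_) (by simp [hj]) ih
      by_cases hi : i ∈ s <;> simp [hi]
  simpa using key Finset.univ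

/-- An equivalence preserved by unary polynomials is a congruence. -/
lemma cong_of_unary {E : A → A → Prop} (hE : Equivalence E)
    (hu : ∀ p, UPol Alg p → ∀ x y, E x y → E (p x) (p y)) : IsCongruence Alg E := by
  refine ⟨hE, fun o x y hxy => ?_⟩
  refine pi_induct (fun z => E (Alg.interp o x) (Alg.interp o z)) x y (hE.refl _) ?_
  intro z j _ hj ih
  refine hE.trans ih ?_
  have hp : UPol Alg (fun a => Alg.interp o fun i => update z j a i) := by
    refine .op o (fun i a => update z j a i) (fun i => ?_)
    by_cases h : i = j
    · subst h; simpa using upol_id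
    · simpa [h] using Gen.const (z i)
  have := hu _ hp _ _ (hxy j)
  rw [← hj] at this
  simpa using this

/-- Over a finite algebra, a binary polynomial is given by a term whose parameters list all
elements of the algebra. -/
lemma bpol_term {N : ℕ} (en : Fin N ≃ A) {f : A × A → A} (hf : BPol Alg f) :
    ∃ t : Term σ (1 + (1 + N)), ∀ x y, f (x, y) =
      t.eval Alg (Fin.append (fun _ => x) (Fin.append (fun _ => y) en)) := by
  induction hf with
  | base g hg =>
    rcases hg with rfl | rfl
    · exact ⟨.var (Fin.castAdd _ 0), fun x y => by simp [Term.eval]⟩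
    · exact ⟨.var (Fin.natAdd 1 (Fin.castAdd _ 0)), fun x y => by
        simp only [Term.eval, Fin.append_right, Fin.append_left]⟩
  | const a =>
    exact ⟨.var (Fin.natAdd 1 (Fin.natAdd 1 (en.symm a))), fun x y => by
      simp only [Term.eval, Fin.append_right, Equiv.apply_symm_apply]⟩
  | op o k _ ih =>
    choose ts hts using ih
    exact ⟨.op o ts, fun x y => by simp only [Term.eval, hts]⟩

end Basic

/-! ### Minimal sets of an atom -/

section Minimal

variable {A : Type} {Alg : UAlg σ A} {ψ : A → A → Prop}

/-- For an atom `ψ`, the pairs of `ψ` not separated by any `p ∘ q` form a congruence strictly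
below `ψ`, hence are trivial. -/
lemma separate (hψ : IsAtomCong Alg ψ) {p : A → A} (hn : ∃ x y, ψ x y ∧ p x ≠ p y)
    {c d : A} (hcd : ψ c d) (hne : c ≠ d) : ∃ q, UPol Alg q ∧ p (q c) ≠ p (q d) := by
  by_contra! hcon
  have hK : IsCongruence Alg (fun x y => ψ x y ∧ ∀ q, UPol Alg q → p (q x) = p (q y)) := by
    refine cong_of_unary ⟨fun x => ⟨hψ.1.1.refl x, fun _ _ => rfl⟩,
      fun h => ⟨hψ.1.1.symm h.1, fun q hq => (h.2 q hq).symm⟩,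
      fun h h' => ⟨hψ.1.1.trans h.1 h'.1, fun q hq => (h.2 q hq).trans (h'.2 q hq)⟩⟩ ?_
    rintro r hr x y ⟨h1, h2⟩
    exact ⟨hr.cong hψ.1 h1, fun q hq => h2 _ (hq.comp hr)⟩
  rcases hψ.2.2 _ hK (fun _ _ h => h.1) with h | h
  · exact hne ((congrFun (congrFun h c) d).mp ⟨hcd, hcon⟩)
  · obtain ⟨x, y, hxy, hp⟩ := hn
    exact hp (((congrFun (congrFun h x) y).mpr hxy).2 _ upol_id)

lemma exists_iterate_eq_id {U : Type} [Finite U] {g : U → U} (hg : Surjective g) :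
    ∃ k, ∀ u, g^[k] (g u) = u := by
  have hb : Bijective g := ⟨Finite.injective_iff_surjective.mpr hg, hg⟩
  let s : Equiv.Perm U := Equiv.ofBijective g hb
  obtain ⟨k, hk⟩ := Nat.exists_eq_succ_of_ne_zero (orderOf_pos s).ne'
  refine ⟨k, fun u => ?_⟩
  have h1 : (s ^ (k + 1)) u = u := by
    rw [← Nat.succ_eq_add_one, ← hk, pow_orderOf_eq_one]; rfl
  rw [← Equiv.Perm.iterate_eq_pow] at h1
  exact h1

lemma exists_iterate_eq_id_on [Finite A] {U : Set A} {g : A → A} (hm : Set.MapsTo g U U)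
    (hs : Set.SurjOn g U U) : ∃ k, ∀ u ∈ U, g^[k] (g u) = u := by
  have hs' : Surjective (hm.restrict g U U) := by
    rintro ⟨u, hu⟩
    obtain ⟨v, hv, rfl⟩ := hs hu
    exact ⟨⟨v, hv⟩, rfl⟩
  obtain ⟨k, hk⟩ := exists_iterate_eq_id hs'
  refine ⟨k, fun u hu => ?_⟩
  have := congrArg Subtype.val (hk ⟨u, hu⟩)
  rw [hm.iterate_restrict] at this
  exact this

/-- `e` is an idempotent unary polynomial whose range is a minimal set for `ψ`: it does not
collapse `ψ`, and every unary polynomial with values in the range of `e` that does not collapse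
`ψ` has the same range. Membership in the range is expressed as `e u = u`. -/
structure MinIdem (Alg : UAlg σ A) (ψ : A → A → Prop) (e : A → A) : Prop where
  upol : UPol Alg e
  idem : ∀ x, e (e x) = e x
  noncollapse : ∃ x y, ψ x y ∧ e x ≠ e y
  min : ∀ p, UPol Alg p → (∀ x, e (p x) = p x) → (∃ x y, ψ x y ∧ p x ≠ p y) →
    ∀ u, e u = u → ∃ x, p x = u

lemma exists_minimal_idem [Finite A] (hψ : IsAtomCong Alg ψ) : ∃ e, MinIdem Alg ψ e := by
  let S : Set (Set A) := {V | ∃ p, UPol Alg p ∧ (∃ x y, ψ x y ∧ p x ≠ p y) ∧ Set.range p = V}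
  have hne : S.Nonempty := by
    refine ⟨_, fun x => x, upol_id, ?_, rfl⟩
    by_contra! hcon
    apply hψ.2.1
    funext x y
    exact propext ⟨fun h => hcon x y h, fun h => h ▸ hψ.1.1.refl x⟩
  obtain ⟨V, ⟨p, hp, hpn, rfl⟩, hVmin⟩ := S.toFinite.exists_minimal hne
  obtain ⟨x, y, hxy, hpxy⟩ := hpn
  obtain ⟨q, hq, hqne⟩ := separate hψ ⟨x, y, hxy, hpxy⟩ (hp.cong hψ.1 hxy) hpxy
  -- `g = p ∘ q` permutes the range of `p`, by minimality applied to `p ∘ q ∘ p`.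
  let g : A → A := fun a => p (q a)
  have hg : UPol Alg g := hp.comp hq
  have hsub : Set.range p ⊆ Set.range (fun a => g (p a)) := by
    refine hVmin ⟨_, hg.comp hp, ⟨x, y, hxy, hqne⟩, rfl⟩ ?_
    rintro _ ⟨a, rfl⟩
    exact ⟨_, rfl⟩
  obtain ⟨k, hk⟩ := exists_iterate_eq_id_on (U := Set.range p) (g := g)
    (fun a _ => ⟨q a, rfl⟩) (by
      intro u hu
      obtain ⟨a, rfl⟩ := hsub hu
      exact ⟨p a, ⟨a, rfl⟩, rfl⟩)
  have hrange : ∀ a, g^[k] (g a) ∈ Set.range p := by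
    intro a
    rw [← iterate_succ_apply, iterate_succ_apply']
    exact ⟨_, rfl⟩
  refine ⟨fun a => g^[k] (g a), (upol_iterate hg k).comp hg, fun a => hk _ (hrange a),
    ⟨p x, p y, hp.cong hψ.1 hxy, ?_⟩, ?_⟩
  · rw [hk _ ⟨x, rfl⟩, hk _ ⟨y, rfl⟩]
    exact hpxy
  · intro r hr hrU hrn u hu
    refine hVmin ⟨r, hr, hrn, rfl⟩ ?_ (hu ▸ hrange u)
    rintro _ ⟨a, rfl⟩
    exact hrU a ▸ hrange _

variable {e : A → A}

/-- A unary polynomial into the minimal set that does not collapse `ψ` there is a permutation of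
it, and an iterate is its inverse. -/
lemma exists_iterate_inverse [Finite A] (he : MinIdem Alg ψ e)
    {α : A → A} (hα : UPol Alg α) (hαU : ∀ x, e (α x) = α x) {x x' : A} (hx : e x = x)
    (hx' : e x' = x') (hxx : ψ x x') (hne : α x ≠ α x') :
    ∃ k, ∀ u, e u = u → α^[k] (α u) = u := by
  refine exists_iterate_eq_id_on (U := {u | e u = u}) (fun u _ => hαU u) ?_
  intro u hu
  obtain ⟨a, ha⟩ := he.min (fun a => α (e a)) (hα.comp he.upol) (fun a => hαU _)
    ⟨x, x', hxx, by rwa [hx, hx']⟩ u hu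
  exact ⟨e a, he.idem a, ha⟩

/-- An elementary step: the image under a unary polynomial of a `ψ`-pair of the minimal set. -/
def Step (Alg : UAlg σ A) (ψ : A → A → Prop) (e : A → A) (x y : A) : Prop :=
  ∃ q u v, UPol Alg q ∧ e u = u ∧ e v = v ∧ ψ u v ∧ x = q u ∧ y = q v

lemma path (hψ : IsAtomCong Alg ψ) (he : MinIdem Alg ψ e) {x y : A} (hxy : ψ x y) :
    Relation.EqvGen (Step Alg ψ e) x y := by
  have hc : IsCongruence Alg (Relation.EqvGen (Step Alg ψ e)) := by
    refine cong_of_unary (Relation.EqvGen.is_equivalence _) ?_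
    intro p hp x y h
    induction h with
    | rel x y h =>
      obtain ⟨q, u, v, hq, hu, hv, huv, rfl, rfl⟩ := h
      exact .rel _ _ ⟨_, u, v, hp.comp hq, hu, hv, huv, rfl, rfl⟩
    | refl x => exact .refl _
    | symm x y _ ih => exact .symm _ _ ih
    | trans x y z _ _ ih ih' => exact .trans _ _ _ ih ih'
  have hle : ∀ a b, Relation.EqvGen (Step Alg ψ e) a b → ψ a b := by
    intro a b h
    induction h with
    | rel x y h =>
      obtain ⟨q, u, v, hq, hu, hv, huv, rfl, rfl⟩ := h
      exact hq.cong hψ.1 huv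
    | refl x => exact hψ.1.1.refl _
    | symm x y _ ih => exact hψ.1.1.symm ih
    | trans x y z _ _ ih ih' => exact hψ.1.1.trans ih ih'
  rcases hψ.2.2 _ hc hle with h | h
  · exfalso
    obtain ⟨a, b, hab, hne⟩ := he.noncollapse
    refine hne ((congrFun (congrFun h (e a)) (e b)).mp (.rel _ _ ?_))
    exact ⟨_, e a, e b, upol_id, he.idem a, he.idem b, he.upol.cong hψ.1 hab, rfl, rfl⟩
  · exact (congrFun (congrFun h x) y).mpr hxy

/-- Some `U`-valued binary polynomial (`U` the range of `e`) depends on both variables, along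
`ψ`-pairs of `U`. -/
def HasBinary (Alg : UAlg σ A) (ψ : A → A → Prop) (e : A → A) : Prop :=
  ∃ f, BPol Alg f ∧ (∀ z, e (f z) = f z) ∧ ∃ x x' y₀ y y₁, e x = x ∧ e x' = x' ∧ e y₀ = y₀ ∧
    e y = y ∧ e y₁ = y₁ ∧ ψ x x' ∧ ψ y y₁ ∧ f (x, y₀) ≠ f (x', y₀) ∧ f (x, y) ≠ f (x, y₁)

/-- From a binary polynomial depending on both variables one obtains one with a two-sided unit on
the minimal set: if `α = f (·, y₀)` and `β = f (x, ·)` permute it, then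
`f (α⁻¹ u, β⁻¹ v)` has the unit `f (x, y₀) = α x = β y₀`. -/
lemma exists_unit [Finite A] (hψ : IsAtomCong Alg ψ) (he : MinIdem Alg ψ e)
    (hb : HasBinary Alg ψ e) :
    ∃ f c a, BPol Alg f ∧ e c = c ∧ e a = a ∧ ψ c a ∧ c ≠ a ∧
      ∀ u, e u = u → f (c, u) = u ∧ f (u, c) = u := by
  obtain ⟨f, hf, hfU, x, x', y₀, y, y', hx, hx', hy₀, hy, hy', hxx, hyy, h1, h2⟩ := hb
  have hα : UPol Alg (fun u => f (u, y₀)) := hf.comp upol_id (.const _)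
  have hβ : UPol Alg (fun v => f (x, v)) := hf.comp (.const _) upol_id
  obtain ⟨k, hk⟩ := exists_iterate_inverse he hα (fun _ => hfU _) hx hx' hxx h1
  obtain ⟨l, hl⟩ := exists_iterate_inverse he hβ (fun _ => hfU _) hy hy' hyy h2
  have hk' : ∀ u, e u = u → f ((fun u => f (u, y₀))^[k] u, y₀) = u := by
    intro u hu
    have := hk u hu
    rwa [← iterate_succ_apply, iterate_succ_apply'] at this
  have hl' : ∀ v, e v = v → f (x, (fun v => f (x, v))^[l] v) = v := by
    intro v hv
    have := hl v hv
    rwa [← iterate_succ_apply, iterate_succ_apply'] at this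
  refine ⟨fun z => f ((fun u => f (u, y₀))^[k] z.1, (fun v => f (x, v))^[l] z.2),
    f (x, y₀), f (x', y₀), hf.comp ((upol_iterate hα k).comp bpol_fst)
      ((upol_iterate hβ l).comp bpol_snd), hfU _, hfU _, hα.cong hψ.1 hxx, h1, ?_⟩
  intro u hu
  have e1 := hk x hx
  have e2 := hl y₀ hy₀
  simp only at e1 e2 ⊢
  rw [e1, e2]
  exact ⟨hl' u hu, hk' u hu⟩

/-! ### Polynomials into a minimal set without binary dependence -/

section Unary

variable {K : Type} [Fintype K] [DecidableEq K]

/-- A polynomial operation in variables indexed by `K`, in the form of its closure under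
substituting binary polynomials. -/
def KPol (Alg : UAlg σ A) (T : (K → A) → A) : Prop :=
  ∀ g : K → A × A → A, (∀ i, BPol Alg (g i)) → BPol Alg (fun z => T fun i => g i z)

lemma KPol.update₂ {T : (K → A) → A} (hT : KPol Alg T) (z : K → A) (i j : K) {q r : A → A}
    (hq : UPol Alg q) (hr : UPol Alg r) :
    BPol Alg (fun w => T (update (update z j (r w.2)) i (q w.1))) := by
  refine hT (fun l w => update (update z j (r w.2)) i (q w.1) l) (fun l => ?_)
  by_cases h : l = i
  · subst h; simpa using hq.comp bpol_fst
  · by_cases h' : l = j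
    · subst h'; simpa [h] using hr.comp bpol_snd
    · simpa [h, h'] using Gen.const (z l)

/-- Without binary dependence, `T` along a pair `q n, q n'` in variable `i` remains separating when
the other variables move in their `ψ`-classes. -/
lemma separates_move (hψ : IsAtomCong Alg ψ) (he : MinIdem Alg ψ e) (hH : ¬ HasBinary Alg ψ e)
    {T : (K → A) → A} (hT : KPol Alg T) (hTU : ∀ z, e (T z) = T z) {i : K} {q : A → A}
    (hq : UPol Alg q) {n n' : A} (hn : e n = n) (hn' : e n' = n') (hnn : ψ n n')
    {z z' : K → A} (hz : ∀ j, ψ (z j) (z' j))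
    (hs : T (update z i (q n)) ≠ T (update z i (q n'))) :
    T (update z' i (q n)) ≠ T (update z' i (q n')) := by
  refine pi_induct (fun z => T (update z i (q n)) ≠ T (update z i (q n'))) z z' hs ?_
  intro w j _ hj hw
  by_cases hij : j = i
  · subst hij
    simpa using hw
  have key : ∀ a b, Relation.EqvGen (Step Alg ψ e) a b →
      (T (update (update w j a) i (q n)) ≠ T (update (update w j a) i (q n')) ↔
        T (update (update w j b) i (q n)) ≠ T (update (update w j b) i (q n'))) := by
    intro a b hab
    induction hab with
    | rel a b h =>
      obtain ⟨r, u, v, hr, hu, hv, huv, rfl, rfl⟩ := h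
      have hf := hT.update₂ w i j hq hr
      -- Separation in the first variable at either end of the step excludes dependence on the
      -- second variable, both at `n` and at `n'`.
      have aux : ∀ m, (m = u ∨ m = v) →
          T (update (update w j (r m)) i (q n)) ≠ T (update (update w j (r m)) i (q n')) →
          T (update (update w j (r u)) i (q n)) = T (update (update w j (r v)) i (q n)) ∧
          T (update (update w j (r u)) i (q n')) = T (update (update w j (r v)) i (q n')) := by
        intro m hm hne
        have hmU : e m = m := by rcases hm with rfl | rfl <;> assumption
        constructor <;> by_contra hcon
        · exact hH ⟨_, hf, fun _ => hTU _, n, n', m, u, v, hn, hn', hmU, hu, hv, hnn, huv,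
            hne, hcon⟩
        · exact hH ⟨_, hf, fun _ => hTU _, n', n, m, u, v, hn', hn, hmU, hu, hv,
            hψ.1.1.symm hnn, huv, hne.symm, hcon⟩
      constructor
      · intro h
        obtain ⟨h1, h2⟩ := aux u (.inl rfl) h
        rwa [← h1, ← h2]
      · intro h
        obtain ⟨h1, h2⟩ := aux v (.inr rfl) h
        rwa [h1, h2]
    | refl a => exact Iff.rfl
    | symm a b _ ih => exact ih.symm
    | trans a b c _ _ ih ih' => exact ih.trans ih'
  refine (key _ _ (path hψ he (hz j))).mp ?_
  rw [← hj, update_eq_self]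
  exact hw

/-- If `T` depends on variable `i` along `ψ`, it does so along an elementary step. -/
lemma exists_step (hψ : IsAtomCong Alg ψ) (he : MinIdem Alg ψ e) {T : (K → A) → A} {i : K}
    {z : K → A} {a : A} (ha : ψ (z i) a) (hs : T z ≠ T (update z i a)) :
    ∃ q n n', UPol Alg q ∧ e n = n ∧ e n' = n' ∧ ψ n n' ∧ ψ (z i) (q n) ∧
      T (update z i (q n)) ≠ T (update z i (q n')) := by
  by_contra! hcon
  have key : ∀ b c, Relation.EqvGen (Step Alg ψ e) b c →
      (ψ (z i) b ↔ ψ (z i) c) ∧ (ψ (z i) b → T (update z i b) = T (update z i c)) := by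
    intro b c hbc
    induction hbc with
    | rel b c h =>
      obtain ⟨q, u, v, hq, hu, hv, huv, rfl, rfl⟩ := h
      have h' := hq.cong hψ.1 huv
      exact ⟨⟨fun h => hψ.1.1.trans h h', fun h => hψ.1.1.trans h (hψ.1.1.symm h')⟩,
        fun h => hcon q u v hq hu hv huv h⟩
    | refl b => exact ⟨Iff.rfl, fun _ => rfl⟩
    | symm b c _ ih => exact ⟨ih.1.symm, fun h => (ih.2 (ih.1.mpr h)).symm⟩
    | trans b c d _ _ ih ih' =>
      exact ⟨ih.1.trans ih'.1, fun h => (ih.2 h).trans (ih'.2 (ih.1.mp h))⟩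
  have := (key _ _ (path hψ he ha)).2 (hψ.1.1.refl _)
  rw [update_eq_self] at this
  exact hs this

/-- Without binary dependence, `T` depends on at most one variable on a product of
`ψ`-classes. -/
lemma not_two_dep (hψ : IsAtomCong Alg ψ) (he : MinIdem Alg ψ e) (hH : ¬ HasBinary Alg ψ e)
    {T : (K → A) → A} (hT : KPol Alg T) (hTU : ∀ z, e (T z) = T z) {i j : K} (hij : i ≠ j)
    {z z' : K → A} (hz : ∀ l, ψ (z l) (z' l)) {a b : A} (ha : ψ (z i) a) (hb : ψ (z' j) b)
    (hi : T z ≠ T (update z i a)) (hj : T z' ≠ T (update z' j b)) : False := by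
  obtain ⟨q, n, n', hq, hn, hn', hnn, hqn, hs⟩ := exists_step hψ he ha hi
  obtain ⟨r, m, m', hr, hm, hm', hmm, hrm, hs'⟩ := exists_step hψ he hb hj
  have hR := hψ.1.1
  have h1 : T (update (update z j (r m)) i (q n)) ≠ T (update (update z j (r m)) i (q n')) := by
    refine separates_move hψ he hH hT hTU hq hn hn' hnn (z := z) (fun l => ?_) hs
    by_cases h : l = j
    · subst h; simpa using hR.trans (hz l) hrm
    · simpa [h] using hR.refl _
  have h2 : T (update (update z i (q n)) j (r m)) ≠ T (update (update z i (q n)) j (r m')) := by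
    refine separates_move hψ he hH hT hTU hr hm hm' hmm (z := z') (fun l => ?_) hs'
    by_cases h : l = i
    · subst h; simpa using hR.trans (hR.symm (hz l)) hqn
    · simpa [h] using hR.symm (hz l)
  rw [update_comm hij, update_comm hij] at h2
  exact hH ⟨_, hT.update₂ z i j hq hr, fun _ => hTU _, n, n', m, m, m', hn, hn', hm, hm, hm',
    hnn, hmm, h1, h2⟩

end Unary

/-- An atom whose minimal set carries no binary dependence is strongly abelian. -/
lemma stronglyAbelian_of_unary (hψ : IsAtomCong Alg ψ) (he : MinIdem Alg ψ e)
    (hH : ¬ HasBinary Alg ψ e) : StronglyAbelianOver Alg ψ (fun a b => a = b) := by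
  intro n m t a₁ a₂ b₁ b₂ b₃ ha hb hb' heq
  by_contra hne
  have hR := hψ.1.1
  have hψt : ψ (t.eval Alg (Fin.append a₁ b₃)) (t.eval Alg (Fin.append a₂ b₃)) := by
    have := gen_eval (Alg := Alg) (G := Set.range fun i (z : Fin (n + m) → A) => z i) t
      (fun i z => z i) (fun i => .base _ ⟨i, rfl⟩)
    refine Gen.rel this hR.refl hψ.1.2 ?_
    rintro _ ⟨i, rfl⟩
    refine Fin.addCases (fun i => ?_) (fun i => ?_) i
    · simpa using ha i
    · simpa using hR.refl _
  obtain ⟨q, hq, hqne⟩ := separate hψ he.noncollapse hψt hne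
  -- Variables are indexed by the sum, so that the two blocks are visible in the index.
  let T : (Fin n ⊕ Fin m → A) → A :=
    fun z => e (q (t.eval Alg (Fin.append (fun i => z (.inl i)) (fun i => z (.inr i)))))
  have hT : KPol Alg T := by
    intro g hg
    refine he.upol.comp (hq.comp ?_)
    have := gen_eval (Alg := Alg) t
      (fun i w => Fin.append (fun i => g (.inl i) w) (fun i => g (.inr i) w) i)
      (G := {Prod.fst, Prod.snd}) (fun i => ?_)
    · exact this
    · refine Fin.addCases (fun i => ?_) (fun i => ?_) i
      · simpa using hg (.inl i)
      · simpa using hg (.inr i)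
  have hTU : ∀ z, e (T z) = T z := fun z => he.idem _
  let w : Fin n ⊕ Fin m → A := Sum.elim a₁ b₁
  -- If `T` depends on no variable in a block `P`, it is constant along changes in `P`.
  have const : ∀ P : Fin n ⊕ Fin m → Prop,
      (∀ i, P i → ∀ z a, (∀ l, ψ (w l) (z l)) → ψ (z i) a → T z = T (update z i a)) →
      ∀ x y, (∀ l, ψ (w l) (x l)) → (∀ l, ψ (w l) (y l)) → (∀ l, ¬ P l → x l = y l) →
      T x = T y := by
    intro P hP x y hx hy hxy
    refine pi_induct (fun z => T x = T z) x y rfl ?_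
    intro z j hz hj ih
    rw [ih]
    have hzw : ∀ l, ψ (w l) (z l) := fun l => by
      rcases hz l with h | h
      · exact h ▸ hx l
      · exact h ▸ hy l
    by_cases hPj : P j
    · exact hP j hPj z _ hzw (hR.trans (hR.symm (hzw j)) (hy j))
    · rw [← hxy j hPj, ← hj, update_eq_self]
  have hw : ∀ a b, (∀ i, ψ (a₁ i) (a i)) → (∀ i, ψ (b₁ i) (b i)) →
      ∀ l, ψ (w l) ((Sum.elim a b : Fin n ⊕ Fin m → A) l) := by
    rintro a b h h' (i | i)
    · exact h i
    · exact h' i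
  have hra : ∀ i, ψ (a₁ i) (a₁ i) := fun i => hR.refl _
  have hrb : ∀ i, ψ (b₁ i) (b₁ i) := fun i => hR.refl _
  have hb3 : ∀ i, ψ (b₁ i) (b₃ i) := fun i => hR.trans (hb i) (hb' i)
  have hgoal : T (Sum.elim a₁ b₃) ≠ T (Sum.elim a₂ b₃) := hqne
  have heq' : T (Sum.elim a₁ b₁) = T (Sum.elim a₂ b₂) :=
    congrArg (fun s => e (q s)) heq
  by_cases hdep : ∀ i : Fin n, ∀ z a, (∀ l, ψ (w l) (z l)) → ψ (z (.inl i)) a →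
      T z = T (update z (.inl i) a)
  · refine hgoal (const (fun l => l.isLeft) ?_ _ _ (hw _ _ hra hb3) (hw _ _ ha hb3) ?_)
    · rintro (i | i) hi
      · exact hdep i
      · simp at hi
    · rintro (i | i) hi
      · simp at hi
      · rfl
  · push Not at hdep
    obtain ⟨i, z, a, hz, hza, hi⟩ := hdep
    have hP : ∀ j : Fin n ⊕ Fin m, j.isRight → ∀ z a, (∀ l, ψ (w l) (z l)) → ψ (z j) a →
        T z = T (update z j a) := by
      rintro (j | j) hj z' b hz' hb
      · simp at hj
      · by_contra hcon
        exact not_two_dep hψ he hH hT hTU (by simp)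
          (fun l => hR.trans (hR.symm (hz l)) (hz' l)) hza hb hi hcon
    have h1 := const (fun l => l.isRight) hP _ _ (hw _ _ hra hb3) (hw _ _ hra hrb) (by
      rintro (i | i) hi
      · rfl
      · simp at hi)
    have h2 := const (fun l => l.isRight) hP _ _ (hw _ _ ha hb) (hw _ _ ha hb3) (by
      rintro (i | i) hi
      · rfl
      · simp at hi)
    exact hgoal (h1.trans (heq'.trans h2))

end Minimal

/-! ### Transfer along a homomorphism -/

section Transfer

variable {A C : Type} {AlgA : UAlg σ A} {AlgC : UAlg σ C} {π : C → A}

lemma hom_eval (hπ : IsHom AlgC AlgA π) {n : ℕ} (t : Term σ n) (v : Fin n → C) :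
    π (t.eval AlgC v) = t.eval AlgA (fun i => π (v i)) := by
  induction t with
  | var i => rfl
  | op o ts ih =>
    simp only [Term.eval]
    rw [hπ]
    congr 1
    funext j
    exact ih j

/-- If `x θ y` with `θ` strongly abelian and meeting the kernel of `π` trivially, and `π x` acts as
a two-sided unit on `π x` and `π y` for a binary polynomial, then `π x = π y`. -/
lemma image_step_eq [Fintype A] (hπ : IsHom AlgC AlgA π) (hsurj : Surjective π)
    {θ : C → C → Prop} (hθ : IsCongruence AlgC θ)
    (hsa : StronglyAbelianOver AlgC θ (fun a b => a = b))
    (hker : ∀ x y, θ x y → π x = π y → x = y) {f : A × A → A} (hf : BPol AlgA f) {x y : C}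
    (hxy : θ x y) (h1 : f (π x, π x) = π x) (h2 : f (π x, π y) = π y)
    (h3 : f (π y, π x) = π y) : π x = π y := by
  let en := (Fintype.equivFin A).symm
  obtain ⟨t, ht⟩ := bpol_term en hf
  obtain ⟨s, hs⟩ := hsurj.hasRightInverse
  let F : C → C → C := fun u v =>
    t.eval AlgC (Fin.append (fun _ => u) (Fin.append (fun _ => v) fun k => s (en k)))
  have hF : ∀ u v, π (F u v) = f (π u, π v) := by
    intro u v
    rw [ht]
    change π (t.eval AlgC _) = _
    rw [hom_eval hπ]
    congr 1
    funext i
    refine Fin.addCases (fun i => ?_) (fun i => ?_) i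
    · simp only [Fin.append_left]
    · simp only [Fin.append_right]
      refine Fin.addCases (fun i => ?_) (fun i => ?_) i
      · simp only [Fin.append_left]
      · simp only [Fin.append_right]
        exact hs _
  have hθF : θ (F x y) (F y x) := by
    have := gen_eval (Alg := AlgC) (G := Set.range fun i (z : Fin (1 + (1 + _)) → C) => z i) t
      (fun i z => z i) (fun i => .base _ ⟨i, rfl⟩)
    refine Gen.rel this hθ.1.refl hθ.2 ?_
    rintro _ ⟨i, rfl⟩
    refine Fin.addCases (fun i => ?_) (fun i => ?_) i
    · simpa only [Fin.append_left] using hxy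
    · simp only [Fin.append_right]
      refine Fin.addCases (fun i => ?_) (fun i => ?_) i
      · simpa only [Fin.append_left] using hθ.1.symm hxy
      · simpa only [Fin.append_right] using hθ.1.refl _
  have heq : F x y = F y x := hker _ _ hθF (by rw [hF, hF, h2, h3])
  have hyx : ∀ i, θ ((Fin.append (fun _ : Fin 1 => y) fun k => s (en k)) i)
      ((Fin.append (fun _ : Fin 1 => x) fun k => s (en k)) i) := by
    intro i
    refine Fin.addCases (fun i => ?_) (fun i => ?_) i
    · simpa only [Fin.append_left] using hθ.1.symm hxy
    · simpa only [Fin.append_right] using hθ.1.refl _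
  have hfin : F x x = F y x :=
    hsa 1 _ t (fun _ => x) (fun _ => y) _ _ _ (fun _ => hxy) hyx (fun _ => hθ.1.refl _) heq
  have := congrArg π hfin
  rwa [hF, hF, h1, h3] at this

/-- A strongly abelian congruence meeting the kernel of `π` trivially and not collapsed by `π`
yields a strongly abelian atom of the image. -/
lemma not_trivial_of_image [Fintype A] (hπ : IsHom AlgC AlgA π) (hsurj : Surjective π)
    {θ : C → C → Prop} (hθ : IsCongruence AlgC θ)
    (hsa : StronglyAbelianOver AlgC θ (fun a b => a = b))
    (hker : ∀ x y, θ x y → π x = π y → x = y) {x₀ y₀ : C} (hxy₀ : θ x₀ y₀)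
    (hne₀ : π x₀ ≠ π y₀) : ¬ HasTrivialSSRadical AlgA := by
  intro htriv
  let T : A → A → Prop := fun u v => ∃ x y, θ x y ∧ π x = u ∧ π y = v
  have hTu : ∀ p, UPol AlgA p → ∀ u v, T u v → T (p u) (p v) := by
    intro p hp u v huv
    refine Gen.rel hp (r := T) ?_ ?_ (by rintro g rfl; exact huv)
    · intro a
      obtain ⟨x, rfl⟩ := hsurj a
      exact ⟨x, x, hθ.1.refl x, rfl, rfl⟩
    · intro o a b hab
      choose x y hxy hx hy using hab
      refine ⟨_, _, hθ.2 o x y hxy, ?_, ?_⟩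
      · rw [hπ]; congr 1; funext j; exact hx j
      · rw [hπ]; congr 1; funext j; exact hy j
  have hTs : ∀ u v, T u v → T v u := fun u v ⟨x, y, h, hx, hy⟩ => ⟨y, x, hθ.1.symm h, hy, hx⟩
  have hR : IsCongruence AlgA (Relation.EqvGen T) := by
    refine cong_of_unary (Relation.EqvGen.is_equivalence _) ?_
    intro p hp x y h
    induction h with
    | rel x y h => exact .rel _ _ (hTu p hp _ _ h)
    | refl x => exact .refl _
    | symm x y _ ih => exact .symm _ _ ih
    | trans x y z _ _ ih ih' => exact .trans _ _ _ ih ih'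
  let S : Set (A → A → Prop) := {r | IsCongruence AlgA r ∧ r ≠ (fun a b => a = b)}
  have hRS : Relation.EqvGen T ∈ S := by
    refine ⟨hR, fun h => hne₀ ?_⟩
    exact (congrFun (congrFun h _) _).mp (.rel _ _ ⟨x₀, y₀, hxy₀, rfl, rfl⟩)
  obtain ⟨ψ, hψR, hψS, hψmin⟩ := S.toFinite.exists_le_minimal hRS
  have hψ : IsAtomCong AlgA ψ := by
    refine ⟨hψS.1, hψS.2, fun r hr hle => ?_⟩
    by_cases h : r = (fun a b => a = b)
    · exact .inl h
    · exact .inr (le_antisymm hle (hψmin ⟨hr, h⟩ hle))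
  obtain ⟨e, he⟩ := exists_minimal_idem hψ
  have hb : HasBinary AlgA ψ e := by
    by_contra hH
    exact htriv ⟨ψ, hψ, stronglyAbelian_of_unary hψ he hH⟩
  obtain ⟨f, c, a, hf, hc, ha, hca, hne, hunit⟩ := exists_unit hψ he hb
  have hstep : ∀ v, e v = v → T c v → v = c := by
    rintro v hv ⟨x, y, hxy, rfl, rfl⟩
    exact (image_step_eq hπ hsurj hθ hsa hker hf hxy (hunit _ hc).1 (hunit _ hv).1
      (hunit _ hv).2).symm
  have hpath : ∀ u v, Relation.EqvGen T u v → (e u = c ↔ e v = c) := by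
    intro u v h
    induction h with
    | rel u v h =>
      have h' := hTu e he.upol _ _ h
      exact ⟨fun hu => hstep _ (he.idem _) (hu ▸ h'),
        fun hv => hstep _ (he.idem _) (hv ▸ hTs _ _ h')⟩
    | refl x => exact Iff.rfl
    | symm x y _ ih => exact ih.symm
    | trans x y z _ _ ih ih' => exact ih.trans ih'
  exact hne (((hpath c a (hψR _ _ hca)).mp hc).symm.trans ha)

end Transfer

end SSRad

/-- A subdirect product of finite algebras with trivial strongly solvable
radical has trivial strongly solvable radical. -/
theorem stmt_6 {σ : Signature} {ι : Type} [Fintype ι] {A : ι → Type}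
    [∀ i, Fintype (A i)] (Alg : ∀ i, UAlg σ (A i))
    (h : ∀ i, HasTrivialSSRadical (Alg i))
    (B : Set (∀ i, A i)) (hB : IsSubalgebra (UAlg.pi Alg) B)
    (hsd : ∀ (i : ι) (a : A i), ∃ x ∈ B, x i = a) :
    HasTrivialSSRadical (UAlg.sub (UAlg.pi Alg) B hB) := by
  rintro ⟨θ, hθ, hsa⟩
  have hex : ∃ x y, θ x y ∧ x ≠ y := by
    by_contra! hcon
    apply hθ.2.1
    funext x y
    exact propext ⟨fun h => hcon x y h, fun h => h ▸ hθ.1.1.refl x⟩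
  obtain ⟨x, y, hxy, hne⟩ := hex
  obtain ⟨i, hi⟩ := Function.ne_iff.mp (fun hcon => hne (Subtype.ext hcon))
  refine SSRad.not_trivial_of_image (AlgC := UAlg.sub (UAlg.pi Alg) B hB)
    (π := fun b : B => b.1 i) (fun _ _ => rfl) ?_ hθ.1 hsa ?_ hxy hi (h i)
  · intro a
    obtain ⟨b, hb, rfl⟩ := hsd i a
    exact ⟨⟨b, hb⟩, rfl⟩
  · -- `θ ⊓ ker π` is a congruence below the atom `θ`, and it omits the pair `(x, y)`.
    have hc : IsCongruence (UAlg.sub (UAlg.pi Alg) B hB)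
        (fun u v => θ u v ∧ u.1 i = v.1 i) := by
      refine ⟨⟨fun u => ⟨hθ.1.1.refl u, rfl⟩, fun h => ⟨hθ.1.1.symm h.1, h.2.symm⟩,
        fun h h' => ⟨hθ.1.1.trans h.1 h'.1, h.2.trans h'.2⟩⟩, ?_⟩
      intro o u v huv
      refine ⟨hθ.1.2 o u v fun j => (huv j).1, ?_⟩
      exact congrArg ((Alg i).interp o) (funext fun j => (huv j).2)
    intro u v huv heq
    rcases hθ.2.2 _ hc (fun _ _ h => h.1) with h | h
    · exact (congrFun (congrFun h u) v).mp ⟨huv, heq⟩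
    · exact absurd ((congrFun (congrFun h x) y).mpr hxy).2 hi
end

section
/- Let F be a finite algebra with a strongly solvable congruence σ that is abelian but not strongly abelian. Then the class HS(F²) of homomorphic images of subalgebras of F × F contains an algebra possessing a strongly solvable congruence that is not abelian. -/
namespace HSSq

/-! ### Polynomial operations as generated subalgebras -/

/-- The subalgebra of `A ^ D` generated by a family `g` of functions together with all constants.
For `g` the coordinate functions on a power of `A` these are the polynomial operations of `A`;
leaving `D` and `g` free avoids re-indexing variables. -/
inductive Pol {σ : Signature} {A : Type} (Alg : UAlg σ A) {ι D : Type} (g : ι → D → A) :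
    (D → A) → Prop
  | gen (i : ι) : Pol Alg g (g i)
  | const (c : A) : Pol Alg g (fun _ => c)
  | op (o : σ.ops) (f : Fin (σ.arity o) → D → A) (hf : ∀ j, Pol Alg g (f j)) :
      Pol Alg g (fun d => Alg.interp o fun j => f j d)

/-- The generator for unary polynomials: the identity. -/
abbrev g1 (A : Type) : Unit → A → A := fun _ x => x

/-- The generators for binary polynomials: the two projections of `A × A`. -/
abbrev g2 (A : Type) : Bool → A × A → A := fun i z => cond i z.1 z.2

/-- The coordinate functions on `I`-tuples. -/
abbrev gI (A I : Type) : I → (I → A) → A := fun i a => a i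

/-- The coordinate functions on pairs consisting of an `I`-tuple and a `J`-tuple. -/
abbrev gIJ (A I J : Type) : I ⊕ J → (I → A) × (J → A) → A :=
  fun i z => Sum.elim z.1 z.2 i

section basics
variable {σ : Signature} {A B : Type} {Alg : UAlg σ A} {AlgB : UAlg σ B} {ι κ D E : Type}

/-- Renaming the variables of a term. -/
def rename {n m : ℕ} (r : Fin n → Fin m) : Term σ n → Term σ m
  | .var i => .var (r i)
  | .op o ts => .op o fun j => rename r (ts j)

theorem eval_rename {n m : ℕ} (r : Fin n → Fin m) (t : Term σ n) (v : Fin m → A) :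
    (rename r t).eval Alg v = t.eval Alg (fun i => v (r i)) := by
  induction t with
  | var i => rfl
  | op o ts ih => simp only [rename, Term.eval, ih]

theorem eval_hom {π : A → B} (hπ : IsHom Alg AlgB π) {n : ℕ} (t : Term σ n) (v : Fin n → A) :
    π (t.eval Alg v) = t.eval AlgB (fun i => π (v i)) := by
  induction t with
  | var i => rfl
  | op o ts ih =>
    simp only [Term.eval, ← ih]
    exact hπ o _

theorem comp_append (π : A → B) {n m : ℕ} (a : Fin n → A) (b : Fin m → A) :
    (fun i => π (Fin.append a b i)) = Fin.append (fun i => π (a i)) (fun i => π (b i)) := by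
  funext i
  refine Fin.addCases (fun i => ?_) (fun i => ?_) i <;> simp

theorem append_ite (p : Prop) [Decidable p] {n : ℕ} (a b : Fin n → A) (k : Fin n) :
    Fin.append a b (if p then Fin.castAdd n k else Fin.natAdd n k) = if p then a k else b k := by
  split
  · rw [Fin.append_left]
  · rw [Fin.append_right]

theorem rel_append {r : A → A → Prop} {n m : ℕ} {a a' : Fin n → A} {b b' : Fin m → A}
    (ha : ∀ i, r (a i) (a' i)) (hb : ∀ i, r (b i) (b' i)) (i : Fin (n + m)) :
    r (Fin.append a b i) (Fin.append a' b' i) := by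
  refine Fin.addCases (fun i => ?_) (fun i => ?_) i <;> simp [ha, hb]

theorem eval_cong {r : A → A → Prop} (hr : IsCongruence Alg r) {n : ℕ} (t : Term σ n)
    {v w : Fin n → A} (h : ∀ i, r (v i) (w i)) : r (t.eval Alg v) (t.eval Alg w) := by
  induction t with
  | var i => exact h i
  | op o ts ih => exact hr.2 o _ _ ih

theorem Pol.cong {g : ι → D → A} {f : D → A} (hf : Pol Alg g f) {r : A → A → Prop}
    (hr : IsCongruence Alg r) {d d' : D} (h : ∀ i, r (g i d) (g i d')) : r (f d) (f d') := by
  induction hf with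
  | gen i => exact h i
  | const c => exact hr.1.refl c
  | op o f _ ih => exact hr.2 o _ _ ih

theorem Pol.comp {g : ι → D → A} {f : D → A} (hf : Pol Alg g f) {g' : κ → E → A} (p : E → D)
    (h : ∀ i, Pol Alg g' (fun e => g i (p e))) : Pol Alg g' (fun e => f (p e)) := by
  induction hf with
  | gen i => exact h i
  | const c => exact .const c
  | op o f _ ih => exact .op o _ ih

theorem Pol.term {g : ι → D → A} {n : ℕ} (t : Term σ n) {v : Fin n → D → A}
    (h : ∀ i, Pol Alg g (v i)) : Pol Alg g (fun d => t.eval Alg (fun i => v i d)) := by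
  induction t with
  | var i => exact h i
  | op o ts ih => exact .op o _ ih

/-- Every member of `Pol Alg g` is a term applied to finitely many generators and constants. -/
theorem Pol.rep {g : ι → D → A} {f : D → A} (hf : Pol Alg g f) :
    ∃ (n : ℕ) (t : Term σ n) (v : Fin n → D → A),
      (∀ k, (∃ i, v k = g i) ∨ ∃ c, v k = fun _ => c) ∧
      ∀ d, f d = t.eval Alg (fun k => v k d) := by
  induction hf with
  | gen i => exact ⟨1, .var 0, fun _ => g i, fun _ => .inl ⟨i, rfl⟩, fun _ => rfl⟩
  | const c => exact ⟨1, .var 0, fun _ _ => c, fun _ => .inr ⟨c, rfl⟩, fun _ => rfl⟩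
  | op o f _ ih =>
    choose n t v hv h using ih
    let e := Fintype.equivFin (Σ j, Fin (n j))
    refine ⟨_, .op o fun j => rename (fun k => e ⟨j, k⟩) (t j),
      fun k => v (e.symm k).1 (e.symm k).2, fun k => hv _ _, fun d => ?_⟩
    refine congrArg (Alg.interp o) (funext fun j => ?_)
    rw [h, eval_rename]
    refine congrArg _ (funext fun k => ?_)
    show _ = v (e.symm (e ⟨j, k⟩)).1 (e.symm (e ⟨j, k⟩)).2 d
    rw [e.symm_apply_apply]

/-- The term condition for polynomials, read off at four points of an arbitrary domain. -/
theorem Pol.tc {α β γ : A → A → Prop} (hα : ∀ x, α x x) (hβ : ∀ x, β x x)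
    (h : TermCond Alg α β γ) {g : ι → D → A} {f : D → A} (hf : Pol Alg g f) {d₁ d₂ d₃ d₄ : D}
    (hg : ∀ i, (g i d₁ = g i d₂ ∧ g i d₃ = g i d₄ ∧ α (g i d₁) (g i d₃)) ∨
      (g i d₁ = g i d₃ ∧ g i d₂ = g i d₄ ∧ β (g i d₁) (g i d₂))) :
    γ (f d₁) (f d₂) → γ (f d₃) (f d₄) := by
  classical
  obtain ⟨n, t, v, hv, hr⟩ := hf.rep
  have hv' : ∀ k, (v k d₁ = v k d₂ ∧ v k d₃ = v k d₄ ∧ α (v k d₁) (v k d₃)) ∨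
      (v k d₁ = v k d₃ ∧ v k d₂ = v k d₄ ∧ β (v k d₁) (v k d₂)) := by
    intro k
    rcases hv k with ⟨i, hi⟩ | ⟨c, hc⟩
    · rw [hi]; exact hg i
    · simp [hc, hα]
  let T : Fin n → Prop := fun k =>
    v k d₁ = v k d₂ ∧ v k d₃ = v k d₄ ∧ α (v k d₁) (v k d₃)
  have key := h n n (rename (fun k => if T k then Fin.castAdd n k else Fin.natAdd n k) t)
    (fun k => v k d₁) (fun k => if T k then v k d₃ else v k d₁)
    (fun k => v k d₁) (fun k => if T k then v k d₁ else v k d₂)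
    (fun k => by
      by_cases hk : T k
      · simpa [hk] using hk.2.2
      · simpa [hk] using hα _)
    (fun k => by
      by_cases hk : T k
      · simpa [hk] using hβ _
      · simpa [hk] using ((hv' k).resolve_left hk).2.2)
  simp only [eval_rename, append_ite] at key
  rw [hr, hr, hr, hr]
  convert key using 3 with k k k k
  all_goals
    funext k
    by_cases hk : T k
    · simp [hk, hk.1, hk.2.1]
    · have := (hv' k).resolve_left hk
      simp [hk, this.1, this.2.1]

/-- The strong term condition for polynomials, read off at four points of an arbitrary domain. -/
theorem Pol.sa {β γ : A → A → Prop} (hβ : ∀ x, β x x)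
    (h : StronglyAbelianOver Alg β γ) {g : ι → D → A} {f : D → A} (hf : Pol Alg g f)
    {d₁ d₂ d₃ d₄ : D}
    (hg : ∀ i, (g i d₁ = g i d₃ ∧ g i d₂ = g i d₄ ∧ β (g i d₁) (g i d₂)) ∨
      (g i d₃ = g i d₄ ∧ β (g i d₁) (g i d₂) ∧ β (g i d₂) (g i d₃))) :
    γ (f d₁) (f d₂) → γ (f d₃) (f d₄) := by
  classical
  obtain ⟨n, t, v, hv, hr⟩ := hf.rep
  have hv' : ∀ k, (v k d₁ = v k d₃ ∧ v k d₂ = v k d₄ ∧ β (v k d₁) (v k d₂)) ∨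
      (v k d₃ = v k d₄ ∧ β (v k d₁) (v k d₂) ∧ β (v k d₂) (v k d₃)) := by
    intro k
    rcases hv k with ⟨i, hi⟩ | ⟨c, hc⟩
    · rw [hi]; exact hg i
    · simp [hc, hβ]
  let T : Fin n → Prop := fun k =>
    v k d₁ = v k d₃ ∧ v k d₂ = v k d₄ ∧ β (v k d₁) (v k d₂)
  have key := h n n (rename (fun k => if T k then Fin.castAdd n k else Fin.natAdd n k) t)
    (fun k => v k d₁) (fun k => if T k then v k d₂ else v k d₁)
    (fun k => v k d₁) (fun k => if T k then v k d₁ else v k d₂)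
    (fun k => if T k then v k d₁ else v k d₃)
    (fun k => by
      by_cases hk : T k
      · simpa [hk] using hk.2.2
      · simpa [hk] using hβ _)
    (fun k => by
      by_cases hk : T k
      · simpa [hk] using hβ _
      · simpa [hk] using ((hv' k).resolve_left hk).2.1)
    (fun k => by
      by_cases hk : T k
      · simpa [hk] using hβ _
      · simpa [hk] using ((hv' k).resolve_left hk).2.2)
  simp only [eval_rename, append_ite] at key
  rw [hr, hr, hr, hr]
  convert key using 3 with k k k k
  all_goals
    funext k
    by_cases hk : T k
    · simp [hk, hk.1, hk.2.1]
    · have := (hv' k).resolve_left hk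
      simp [hk, this.1]

/-- An equivalence relation preserved by all unary polynomials is a congruence. -/
theorem cong_of_unary {r : A → A → Prop} (hr : Equivalence r)
    (h : ∀ f, Pol Alg (g1 A) f → ∀ x y, r x y → r (f x) (f y)) : IsCongruence Alg r := by
  classical
  refine ⟨hr, fun o x y hxy => ?_⟩
  have key : ∀ s : Finset (Fin (σ.arity o)),
      r (Alg.interp o x) (Alg.interp o fun i => if i ∈ s then y i else x i) := by
    intro s
    induction s using Finset.induction_on with
    | empty => simpa using hr.refl _
    | insert a s ha ih =>
      refine hr.trans ih ?_
      have := h (fun z => Alg.interp o fun i =>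
        if i = a then z else if i ∈ s then y i else x i)
        (.op o (fun i z => if i = a then z else if i ∈ s then y i else x i) (fun i => by
          by_cases hi : i = a
          · simpa [hi] using Pol.gen (Alg := Alg) (g := g1 A) ()
          · simpa [hi] using Pol.const _)) (x a) (y a) (hxy a)
      convert this using 3 with i i
      · by_cases hi : i = a
        · subst hi; simp [ha]
        · simp [hi]
      · by_cases hi : i = a
        · subst hi; simp
        · simp [hi]
  simpa using key Finset.univ

theorem Pol.iterate {f : A → A} (hf : Pol Alg (g1 A) f) (k : ℕ) : Pol Alg (g1 A) (f^[k]) := by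
  induction k with
  | zero => exact Pol.gen (g := g1 A) ()
  | succ k ih => exact ih.comp f (fun _ => hf)

end basics

/-! ### Minimal covers without snags are strongly abelian -/

/-- `r` contains no 1-snag: there are no `r`-related `a ≠ b` and binary polynomial `f` with
`f (a, b) = f (b, a) = a` and `f (b, b) = b`. -/
def NoSnag {σ : Signature} {A : Type} (Alg : UAlg σ A) (r : A → A → Prop) : Prop :=
  ∀ f, Pol Alg (g2 A) f → ∀ a b, r a b → f (a, b) = a → f (b, a) = a → f (b, b) = b → a = b

/-- The three properties of a `(β, γ)`-minimal set `U`, for a cover `β ≺ γ`, that are needed here: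
polynomials into `U` separate `γ` modulo `β`; a unary polynomial into `U` that does not collapse
`γ` on `U` into `β` restricts to a permutation of `U` with polynomial inverse; and `γ` is the
transitive closure of `β` together with the links, that is, the images under unary polynomials of
`γ`-related pairs of elements of `U`. -/
structure MinSet {σ : Signature} {A : Type} (Alg : UAlg σ A) (β γ : A → A → Prop)
    (U : Set A) : Prop where
  sep : ∀ x y, γ x y → ¬ β x y →
    ∃ f, Pol Alg (g1 A) f ∧ (∀ z, f z ∈ U) ∧ ¬ β (f x) (f y)
  perm : ∀ h, Pol Alg (g1 A) h → (∀ z, h z ∈ U) → ∀ x ∈ U, ∀ y ∈ U, γ x y → ¬ β (h x) (h y) →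
    ∃ h', Pol Alg (g1 A) h' ∧ (∀ u ∈ U, h' (h u) = u) ∧ ∀ u ∈ U, h (h' u) = u
  link : ∀ E : A → A → Prop, Equivalence E → (∀ x y, β x y → E x y) →
    (∀ q, Pol Alg (g1 A) q → ∀ u ∈ U, ∀ v ∈ U, γ u v → E (q u) (q v)) →
    ∀ x y, γ x y → E x y

section core
variable {σ : Signature} {A : Type} {Alg : UAlg σ A} {β γ : A → A → Prop} {U : Set A}

/-- A self-map of a finite set that is onto `U` has a power that is the identity on `U`. -/
theorem exists_iterate_eq [Finite A] {f : A → A} (hU : ∀ u ∈ U, f u ∈ U)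
    (hs : ∀ u ∈ U, ∃ v ∈ U, f v = u) : ∃ k, ∀ u ∈ U, f^[k + 1] u = u := by
  classical
  let F : U → U := fun u => ⟨f u, hU u u.2⟩
  have hF : Function.Surjective F := fun u => by
    obtain ⟨v, hv, h⟩ := hs u u.2
    exact ⟨⟨v, hv⟩, Subtype.ext h⟩
  let e := Equiv.ofBijective F (Finite.injective_iff_surjective.2 hF |>.bijective_of_finite)
  have hit : ∀ (n : ℕ) (u : U), ((e ^ n) u : A) = f^[n] u := by
    intro n
    induction n with
    | zero => intro u; rfl
    | succ n ih =>
      intro u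
      rw [pow_succ, Equiv.Perm.mul_apply, ih]
      rfl
  refine ⟨orderOf e - 1, fun u hu => ?_⟩
  rw [Nat.sub_add_cancel (orderOf_pos e), ← hit _ ⟨u, hu⟩, pow_orderOf_eq_one]
  rfl

/-- Covers have minimal sets: take an inclusion-minimal range of a unary polynomial that does not
collapse `γ` into `β`. -/
theorem exists_minSet [Finite A] (hβ : IsCongruence Alg β) (hγ : IsCongruence Alg γ)
    (hβγ : ∀ x y, β x y → γ x y) (hne : ∃ x y, γ x y ∧ ¬ β x y)
    (hmin : ∀ μ, IsCongruence Alg μ → (∀ x y, β x y → μ x y) → (∀ x y, μ x y → γ x y) →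
      (∃ x y, μ x y ∧ ¬ β x y) → ∀ x y, γ x y → μ x y) :
    ∃ U, MinSet Alg β γ U := by
  obtain ⟨U, ⟨p, hp, rfl, x₀, y₀, h₀, hn₀⟩, hU⟩ := (wellFounded_lt (α := Set A)).has_min
    {U | ∃ p, Pol Alg (g1 A) p ∧ U = Set.range p ∧ ∃ x y, γ x y ∧ ¬ β (p x) (p y)}
    (by
      obtain ⟨x, y, h, hn⟩ := hne
      exact ⟨_, fun x => x, .gen (g := g1 A) (), rfl, x, y, h, hn⟩)
  have hpγ : γ (p x₀) (p y₀) := hp.cong hγ (fun _ => h₀)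
  have surj : ∀ q, Pol Alg (g1 A) q → (∀ z, q z ∈ Set.range p) →
      (∃ x y, γ x y ∧ ¬ β (q x) (q y)) → Set.range q = Set.range p := by
    intro q hq hqU hqn
    have hle : Set.range q ⊆ Set.range p := by rintro _ ⟨z, rfl⟩; exact hqU z
    by_contra hneq
    exact hU _ ⟨q, hq, rfl, hqn⟩ (lt_of_le_of_ne hle hneq)
  -- The pairs that no polynomial into `U` separates modulo `β` form a congruence below `γ`.
  have sep : ∀ x y, γ x y → ¬ β x y →
      ∃ f, Pol Alg (g1 A) f ∧ (∀ z, f z ∈ Set.range p) ∧ ¬ β (f x) (f y) := by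
    intro x y hxy hn
    by_contra hcon
    push Not at hcon
    have hμ : IsCongruence Alg (fun x y => γ x y ∧
        ∀ f, Pol Alg (g1 A) f → (∀ z, f z ∈ Set.range p) → β (f x) (f y)) := by
      refine cong_of_unary ⟨fun x => ⟨hγ.1.refl x, fun f _ _ => hβ.1.refl _⟩,
        fun h => ⟨hγ.1.symm h.1, fun f hf hz => hβ.1.symm (h.2 f hf hz)⟩,
        fun h h' => ⟨hγ.1.trans h.1 h'.1,
          fun f hf hz => hβ.1.trans (h.2 f hf hz) (h'.2 f hf hz)⟩⟩ ?_
      intro f hf x y h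
      exact ⟨hf.cong hγ (fun _ => h.1),
        fun f' hf' hz => h.2 _ (hf'.comp f (fun _ => hf)) (fun z => hz _)⟩
    have := hmin _ hμ (fun x y h => ⟨hβγ x y h, fun f hf _ => hf.cong hβ (fun _ => h)⟩)
      (fun x y h => h.1) ⟨x, y, ⟨hxy, hcon⟩, hn⟩ x₀ y₀ h₀
    exact hn₀ (this.2 p hp fun z => ⟨z, rfl⟩)
  obtain ⟨f, hf, hfU, hfn⟩ := sep _ _ hpγ hn₀
  have hfp := surj (fun z => f (p z)) (hf.comp p fun _ => hp) (fun z => hfU _) ⟨x₀, y₀, h₀, hfn⟩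
  obtain ⟨k, hk⟩ := exists_iterate_eq (f := f) (U := Set.range p) (fun u _ => hfU u) (by
    intro u hu
    rw [← hfp] at hu
    obtain ⟨z, rfl⟩ := hu
    exact ⟨p z, ⟨z, rfl⟩, rfl⟩)
  have he := hf.iterate (k + 1)
  have heU : ∀ z, f^[k + 1] z ∈ Set.range p := fun z => by
    rw [Function.iterate_succ_apply']; exact hfU _
  refine ⟨Set.range p, sep, ?_, ?_⟩
  · intro h hh hhU x hx y hy hxy hn
    have hhe := surj (fun z => h (f^[k + 1] z)) (hh.comp _ fun _ => he) (fun z => hhU _)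
      ⟨x, y, hxy, by rwa [hk x hx, hk y hy]⟩
    obtain ⟨l, hl⟩ := exists_iterate_eq (f := h) (U := Set.range p) (fun u _ => hhU u) (by
      intro u hu
      rw [← hhe] at hu
      obtain ⟨z, rfl⟩ := hu
      exact ⟨f^[k + 1] z, heU z, rfl⟩)
    refine ⟨h^[l], hh.iterate l, fun u hu => ?_, fun u hu => ?_⟩
    · exact (Function.iterate_succ_apply h l u).symm.trans (hl u hu)
    · exact (Function.iterate_succ_apply' h l u).symm.trans (hl u hu)
  · intro E hE hEβ hEl x y hxy
    let L : A → A → Prop := fun x y => β x y ∨ ∃ q, Pol Alg (g1 A) q ∧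
      ∃ u ∈ Set.range p, ∃ v ∈ Set.range p, γ u v ∧ x = q u ∧ y = q v
    have hLc : IsCongruence Alg (Relation.EqvGen L) := by
      refine cong_of_unary (Relation.EqvGen.is_equivalence L) ?_
      intro g hg x y h
      induction h with
      | rel x y h =>
        refine .rel _ _ ?_
        rcases h with h | ⟨q, hq, u, hu, v, hv, huv, rfl, rfl⟩
        · exact .inl (hg.cong hβ fun _ => h)
        · exact .inr ⟨_, hg.comp q fun _ => hq, u, hu, v, hv, huv, rfl, rfl⟩
      | refl x => exact .refl _
      | symm x y _ ih => exact .symm _ _ ih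
      | trans x y z _ _ ih ih' => exact .trans _ _ _ ih ih'
    have hmem := hmin _ hLc (fun x y h => .rel _ _ (.inl h))
      (fun x y h => by
        induction h with
        | rel x y h =>
          rcases h with h | ⟨q, hq, u, hu, v, hv, huv, rfl, rfl⟩
          · exact hβγ _ _ h
          · exact hq.cong hγ fun _ => huv
        | refl x => exact hγ.1.refl _
        | symm x y _ ih => exact hγ.1.symm ih
        | trans x y z _ _ ih ih' => exact hγ.1.trans ih ih')
      ⟨p x₀, p y₀, .rel _ _ (.inr ⟨fun x => x, .gen (g := g1 A) (), p x₀, ⟨_, rfl⟩, p y₀,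
        ⟨_, rfl⟩, hpγ, rfl, rfl⟩), hn₀⟩ x y hxy
    clear hxy
    induction hmem with
    | rel x y h =>
      rcases h with h | ⟨q, hq, u, hu, v, hv, huv, rfl, rfl⟩
      · exact hEβ _ _ h
      · exact hEl q hq u hu v hv huv
    | refl x => exact hE.refl _
    | symm x y _ ih => exact hE.symm (ih)
    | trans x y z _ _ ih ih' => exact hE.trans ih ih'

/-- Two polynomial permutations `G (·, y₀)` and `G (x₀, ·)` of `U` turn `G` into an operation on
`U` with neutral element `G (x₀, y₀)`, by the usual passage from a quasigroup to a loop; such an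
operation has a 1-snag. -/
theorem MinSet.noboth (hU : MinSet Alg β γ U) (hγ : IsCongruence Alg γ) (hβ : IsCongruence Alg β)
    (hsn : NoSnag Alg γ) {G : A × A → A}
    (hG : Pol Alg (g2 A) G) (hGU : ∀ z, G z ∈ U) {x₀ x₁ y₀ y₁ : A} (hx₀ : x₀ ∈ U) (hx₁ : x₁ ∈ U)
    (hy₀ : y₀ ∈ U) (hy₁ : y₁ ∈ U) (hx : γ x₀ x₁) (hy : γ y₀ y₁)
    (h : ¬ β (G (x₀, y₀)) (G (x₁, y₀))) : β (G (x₀, y₀)) (G (x₀, y₁)) := by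
  by_contra h'
  have hπ : Pol Alg (g1 A) (fun x => G (x, y₀)) := hG.comp (fun x => (x, y₀)) fun i => by
    cases i
    · exact .const _
    · exact .gen (g := g1 A) ()
  have hρ : Pol Alg (g1 A) (fun y => G (x₀, y)) := hG.comp (fun y => (x₀, y)) fun i => by
    cases i
    · exact .gen (g := g1 A) ()
    · exact .const _
  obtain ⟨π', hπ', hπl, hπr⟩ := hU.perm _ hπ (fun _ => hGU _) x₀ hx₀ x₁ hx₁ hx h
  obtain ⟨ρ', hρ', hρl, hρr⟩ := hU.perm _ hρ (fun _ => hGU _) y₀ hy₀ y₁ hy₁ hy h'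
  have hf : Pol Alg (g2 A) (fun z : A × A => G (π' z.1, ρ' z.2)) :=
    hG.comp (fun z : A × A => (π' z.1, ρ' z.2)) fun i => by
      cases i
      · exact hρ'.comp _ fun _ => .gen (g := g2 A) false
      · exact hπ'.comp _ fun _ => .gen (g := g2 A) true
  have hab := hsn _ hf (G (x₁, y₀)) (G (x₀, y₀)) (hπ.cong hγ fun _ => hγ.1.symm hx)
    (by simp only [hπl x₁ hx₁, hρl y₀ hy₀])
    (by simp only [hπl x₀ hx₀, hρr _ (hGU (x₁, y₀))])
    (by simp only [hπl x₀ hx₀, hρl y₀ hy₀])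
  rw [hab] at h
  exact h (hβ.1.refl _)

/-- Links applied in several coordinates at once, together with `β`, connect any two tuples that
are `γ`-related coordinatewise. -/
theorem MinSet.tuple (hU : MinSet Alg β γ U) (hβ : IsCongruence Alg β) {n : ℕ}
    {E : (Fin n → A) → (Fin n → A) → Prop} (hE : Equivalence E)
    (hEβ : ∀ a a', (∀ i, β (a i) (a' i)) → E a a')
    (hEl : ∀ P : A → Fin n → A, (∀ i, Pol Alg (g1 A) fun z => P z i) →
      ∀ u ∈ U, ∀ v ∈ U, γ u v → E (P u) (P v))
    {a a' : Fin n → A} (h : ∀ i, γ (a i) (a' i)) : E a a' := by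
  classical
  have key : ∀ s : Finset (Fin n), E a (fun i => if i ∈ s then a' i else a i) := by
    intro s
    induction s using Finset.induction_on with
    | empty => simpa using hE.refl a
    | insert j s hj ih =>
      refine hE.trans ih ?_
      have := hU.link (fun x y => E (fun i => if i = j then x else if i ∈ s then a' i else a i)
          (fun i => if i = j then y else if i ∈ s then a' i else a i))
        ⟨fun _ => hE.refl _, fun h => hE.symm h, fun h h' => hE.trans h h'⟩
        (fun x y hxy => hEβ _ _ fun i => by
          split
          · exact hxy
          · exact hβ.1.refl _)
        (fun q hq u hu v hv huv => hEl
          (fun z i => if i = j then q z else if i ∈ s then a' i else a i)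
          (fun i => by
            by_cases hi : i = j
            · simpa [hi] using hq
            · simpa [hi] using Pol.const _) u hu v hv huv)
        _ _ (h j)
      convert this using 2 with i i
      · by_cases hi : i = j
        · subst hi; simp [hj]
        · simp [hi]
      · by_cases hi : i = j
        · subst hi; simp
        · simp [hi]
  simpa using key Finset.univ

/-- If `K (·, b)` separates the ends of a link, then changing `b` has no effect on `K` at the
ends of that link. -/
theorem MinSet.move (hU : MinSet Alg β γ U) (hβ : IsCongruence Alg β) (hγ : IsCongruence Alg γ)
    (hsn : NoSnag Alg γ) {n m : ℕ} {K : (Fin n → A) → (Fin m → A) → A}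
    (hKU : ∀ a b, K a b ∈ U)
    (hKβ : ∀ a b b', (∀ i, β (b i) (b' i)) → β (K a b) (K a b'))
    (hK : ∀ (P : A → Fin n → A) (Q : A → Fin m → A), (∀ i, Pol Alg (g1 A) fun z => P z i) →
      (∀ i, Pol Alg (g1 A) fun z => Q z i) → Pol Alg (g2 A) fun z => K (P z.1) (Q z.2))
    {P : A → Fin n → A} (hP : ∀ i, Pol Alg (g1 A) fun z => P z i) {u v : A} (hu : u ∈ U)
    (hv : v ∈ U) (huv : γ u v) {b b' : Fin m → A} (hb : ∀ i, γ (b i) (b' i))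
    (hn : ¬ β (K (P u) b) (K (P v) b)) :
    β (K (P u) b) (K (P u) b') ∧ β (K (P v) b) (K (P v) b') := by
  have tr := @hβ.1.trans
  have sy := @hβ.1.symm
  have := hU.tuple hβ (E := fun b b' =>
      (β (K (P u) b) (K (P u) b') ∧ β (K (P v) b) (K (P v) b')) ∨
      (β (K (P u) b) (K (P v) b) ∧ β (K (P u) b') (K (P v) b')))
    ⟨fun b => .inl ⟨hβ.1.refl _, hβ.1.refl _⟩,
      fun h => h.imp (fun h => ⟨sy h.1, sy h.2⟩) (fun h => ⟨h.2, h.1⟩),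
      fun h h' => by
        rcases h with h | h <;> rcases h' with h' | h'
        · exact .inl ⟨tr h.1 h'.1, tr h.2 h'.2⟩
        · exact .inr ⟨tr h.1 (tr h'.1 (sy h.2)), h'.2⟩
        · exact .inr ⟨h.1, tr (sy h'.1) (tr h.2 h'.2)⟩
        · exact .inr ⟨h.1, h'.2⟩⟩
    (fun b b' h => .inl ⟨hKβ _ _ _ h, hKβ _ _ _ h⟩)
    (fun Q hQ x hx y hy hxy => by
      have nb := fun {x₀ x₁ y₀ y₁ : A} => hU.noboth hγ hβ hsn (hK P Q hP hQ)
        (fun z => hKU _ _) (x₀ := x₀) (x₁ := x₁) (y₀ := y₀) (y₁ := y₁)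
      by_cases h₁ : β (K (P u) (Q x)) (K (P v) (Q x))
      · by_cases h₂ : β (K (P u) (Q y)) (K (P v) (Q y))
        · exact .inr ⟨h₁, h₂⟩
        · exact .inl ⟨sy (nb hu hv hy hx huv (hγ.1.symm hxy) h₂),
            sy (nb hv hu hy hx (hγ.1.symm huv) (hγ.1.symm hxy) fun h => h₂ (sy h))⟩
      · exact .inl ⟨nb hu hv hx hy huv hxy h₁,
          nb hv hu hx hy (hγ.1.symm huv) hxy fun h => h₁ (sy h)⟩)
    hb
  exact this.resolve_right fun h => hn h.1

/-- If `K (·, b)` separates two related tuples, it separates the ends of a link inside their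
block. -/
theorem MinSet.exists_link (hU : MinSet Alg β γ U) (hβ : IsCongruence Alg β)
    (hγ : IsCongruence Alg γ) {n : ℕ} {K : (Fin n → A) → A}
    (hKβ : ∀ a a', (∀ i, β (a i) (a' i)) → β (K a) (K a'))
    (hβγ : ∀ x y, β x y → γ x y)
    {a a' : Fin n → A} (ha : ∀ i, γ (a i) (a' i)) (hn : ¬ β (K a) (K a')) :
    ∃ P : A → Fin n → A, (∀ i, Pol Alg (g1 A) fun z => P z i) ∧ ∃ u ∈ U, ∃ v ∈ U, γ u v ∧
      (∀ i, γ (a i) (P u i)) ∧ ¬ β (K (P u)) (K (P v)) := by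
  by_contra hcon
  push Not at hcon
  refine hn ?_
  have := hU.tuple hβ (n := n) (E := fun c c' => (∀ i, γ (a i) (c i) ↔ γ (a i) (c' i)) ∧
      ((∀ i, γ (a i) (c i)) → β (K c) (K c')))
    ⟨fun c => ⟨fun i => Iff.rfl, fun _ => hβ.1.refl _⟩,
      fun h => ⟨fun i => (h.1 i).symm, fun h' => hβ.1.symm (h.2 fun i => (h.1 i).2 (h' i))⟩,
      fun h h' => ⟨fun i => (h.1 i).trans (h'.1 i), fun h'' =>
        hβ.1.trans (h.2 h'') (h'.2 fun i => (h.1 i).1 (h'' i))⟩⟩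
    ?_ ?_ ha
  · exact this.2 fun i => hγ.1.refl _
  · intro c c' h
    exact ⟨fun i => ⟨fun h' => hγ.1.trans h' (hβγ _ _ (h i)),
      fun h' => hγ.1.trans h' (hγ.1.symm (hβγ _ _ (h i)))⟩, fun _ => hKβ _ _ h⟩
  · intro P hP u hu v hv huv
    have hPuv : ∀ i, γ (P u i) (P v i) := fun i => (hP i).cong hγ fun _ => huv
    exact ⟨fun i => ⟨fun h => hγ.1.trans h (hPuv i), fun h => hγ.1.trans h (hγ.1.symm (hPuv i))⟩,
      hcon P hP u hu v hv huv⟩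

/-- A cover without snags is strongly abelian. If the strong term condition fails, some link in
the first block of arguments is separated by `K (·, b₃)`, so by `MinSet.move` one row of `K` does
not depend on the second block. Some other row does depend on it, along a link in the second
block, so by `MinSet.move` with the blocks exchanged all rows do: a contradiction. -/
theorem MinSet.stronglyAbelian (hU : MinSet Alg β γ U) (hβ : IsCongruence Alg β)
    (hγ : IsCongruence Alg γ) (hβγ : ∀ x y, β x y → γ x y) (hsn : NoSnag Alg γ) :
    StronglyAbelianOver Alg γ β := by
  intro n m t a₁ a₂ b₁ b₂ b₃ ha hb hb' h
  by_contra hn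
  have tr := @hβ.1.trans
  have sy := @hβ.1.symm
  have gr := hγ.1.refl
  have gt := @hγ.1.trans
  have gs := @hγ.1.symm
  obtain ⟨f, hf, hfU, hfn⟩ := hU.sep _ _ (eval_cong hγ t (rel_append ha fun i => gr (b₃ i))) hn
  have hf₁ := hf.cong hβ fun _ => h
  let K : (Fin n → A) → (Fin m → A) → A := fun a b => f (t.eval Alg (Fin.append a b))
  change ¬ β (K a₁ b₃) (K a₂ b₃) at hfn
  change β (K a₁ b₁) (K a₂ b₂) at hf₁
  have hKU : ∀ a b, K a b ∈ U := fun a b => hfU _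
  have hKβ : ∀ a a' b b', (∀ i, β (a i) (a' i)) → (∀ i, β (b i) (b' i)) →
      β (K a b) (K a' b') := fun a a' b b' h h' =>
    hf.cong hβ fun _ => eval_cong hβ t (rel_append h h')
  have hKp : ∀ {D ι : Type} {g : ι → D → A} (P : D → Fin n → A) (Q : D → Fin m → A),
      (∀ i, Pol Alg g fun z => P z i) → (∀ i, Pol Alg g fun z => Q z i) →
      Pol Alg g fun z => K (P z) (Q z) := by
    intro D ι g P Q hP hQ
    refine hf.comp (fun z => t.eval Alg (Fin.append (P z) (Q z))) fun _ => ?_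
    refine Pol.term t (v := fun i z => Fin.append (P z) (Q z) i) fun i => ?_
    refine Fin.addCases (fun i => ?_) (fun i => ?_) i
    · simpa using hP i
    · simpa using hQ i
  have p1 : ∀ {k : ℕ} {P : A → Fin k → A}, (∀ i, Pol Alg (g1 A) fun z => P z i) →
      ∀ i, Pol Alg (g2 A) fun z => P z.1 i := fun hP i =>
    (hP i).comp _ fun _ => .gen (g := g2 A) true
  have p2 : ∀ {k : ℕ} {P : A → Fin k → A}, (∀ i, Pol Alg (g1 A) fun z => P z i) →
      ∀ i, Pol Alg (g2 A) fun z => P z.2 i := fun hP i =>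
    (hP i).comp _ fun _ => .gen (g := g2 A) false
  obtain ⟨P, hP, u, hu, v, hv, huv, hau, hPn⟩ := hU.exists_link hβ hγ (K := fun a => K a b₃)
    (fun a a' h => hKβ _ _ _ _ h fun i => hβ.1.refl _) hβγ ha hfn
  have hPc : ∀ b, (∀ i, γ (b₃ i) (b i)) → β (K (P u) b₃) (K (P u) b) := fun b hb =>
    (hU.move hβ hγ hsn hKU (fun a b b' h => hKβ _ _ _ _ (fun i => hβ.1.refl _) h)
      (fun P Q hP hQ => hKp _ _ (p1 hP) (p2 hQ)) hP hu hv huv hb hPn).1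
  -- Some row in the block depends on the second argument, for otherwise all values would agree.
  obtain ⟨a, b, haa, hbb, hab⟩ : ∃ a b, (∀ i, γ (a i) (a₁ i)) ∧ (∀ i, γ (b₃ i) (b i)) ∧
      ¬ β (K a b₃) (K a b) := by
    by_contra hcon
    push Not at hcon
    have e₁ := hcon a₁ b₁ (fun i => gr _) (fun i => gs (gt (hb i) (hb' i)))
    have e₂ := hcon a₂ b₂ (fun i => gs (ha i)) (fun i => gs (hb' i))
    exact hfn (tr e₁ (tr hf₁ (sy e₂)))
  obtain ⟨Q, hQ, x, hx, y, hy, hxy, hbx, hQn⟩ := hU.exists_link hβ hγ (K := fun b => K a b)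
    (fun a a' h => hKβ _ _ _ _ (fun i => hβ.1.refl _) h) hβγ hbb hab
  have hm := hU.move hβ hγ hsn (K := fun b a => K a b) (fun b a => hKU a b)
    (fun a b b' h => hKβ _ _ _ _ h (fun i => hβ.1.refl _))
    (fun Q P hQ hP => hKp _ _ (p2 hP) (p1 hQ)) hQ hx hy hxy
    (b := a) (b' := P u) (fun i => gt (haa i) (hau i)) hQn
  have hby : ∀ i, γ (b₃ i) (Q y i) := fun i =>
    gt (hbx i) ((hQ i).cong hγ fun _ => hxy)
  exact hQn (tr hm.1 (tr (sy (hPc _ hbx)) (tr (hPc _ hby) (sy hm.2))))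

end core

/-! ### Chains of strongly abelian steps and quotients -/

/-- `r ≤ r'` are congruences above `β`, and `r'` is strongly abelian over `r`. -/
def Step {σ : Signature} {A : Type} (Alg : UAlg σ A) (β r r' : A → A → Prop) : Prop :=
  IsCongruence Alg r ∧ IsCongruence Alg r' ∧ (∀ x y, β x y → r x y) ∧ (∀ x y, r x y → r' x y) ∧
    StronglyAbelianOver Alg r' r

section chains
variable {σ : Signature} {A B : Type} {Alg : UAlg σ A} {AlgB : UAlg σ B}

theorem eq_isCongruence : IsCongruence Alg (fun a b : A => a = b) :=
  ⟨⟨fun _ => rfl, fun h => h.symm, fun h h' => h.trans h'⟩, fun _ _ _ h =>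
    congrArg _ (funext h)⟩

/-- A snag cannot lie in a chain of strongly abelian steps: applied to
`f (b, a) = a = f (a, b)`, the strong term condition yields `f (b, b) = f (a, b)`. -/
theorem noSnag_of_chain {s : A → A → Prop} (h : IsStronglySolvable Alg s) : NoSnag Alg s := by
  obtain ⟨n, c, h0, hl, hc, hstep⟩ := h
  intro f hf a b hab h₁ h₂ h₃
  have key : ∀ i : Fin (n + 1), c i a b → a = b := by
    intro i
    induction i using Fin.induction with
    | zero => intro h; rwa [h0] at h
    | succ i ih =>
      intro h
      refine ih ?_
      have hr := (hc i.succ).1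
      have := hf.sa (γ := c i.castSucc) (fun x => hr.refl x) (hstep i).2
        (d₁ := (b, a)) (d₂ := (a, b)) (d₃ := (b, b)) (d₄ := (a, b)) (fun k => by
          cases k
          · exact .inr ⟨rfl, h, hr.refl _⟩
          · exact .inl ⟨rfl, rfl, hr.symm h⟩)
      rw [h₁, h₂, h₃] at this
      exact (hc i.castSucc).1.symm (this ((hc i.castSucc).1.refl _))
  exact key (Fin.last n) (by rwa [hl])

/-- A snag-free interval in the congruence lattice of a finite algebra is a chain of strongly
abelian steps: each cover in a maximal chain is one by `MinSet.stronglyAbelian`. -/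
theorem exists_chain [Finite A] {β τ : A → A → Prop} (hβ : IsCongruence Alg β)
    (hτ : IsCongruence Alg τ) (hle : ∀ x y, β x y → τ x y) (hsn : NoSnag Alg τ) :
    Relation.ReflTransGen (Step Alg β) β τ := by
  have key : ∀ r : A → A → Prop, IsCongruence Alg r → β ≤ r → r ≤ τ →
      Relation.ReflTransGen (Step Alg β) r τ := by
    intro r
    induction r using (wellFounded_gt (α := A → A → Prop)).induction with
    | _ r ih =>
    intro hr hβr hrτ
    by_cases hrt : τ ≤ r
    · rw [le_antisymm hrτ hrt]
    have hex : ∃ x y, τ x y ∧ ¬ r x y := by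
      by_contra hcon
      push Not at hcon
      exact hrt hcon
    obtain ⟨γ, ⟨hγ, hrγ, hγτ, hγn⟩, hmin⟩ := (wellFounded_lt (α := A → A → Prop)).has_min
      {μ | IsCongruence Alg μ ∧ r ≤ μ ∧ μ ≤ τ ∧ ∃ x y, μ x y ∧ ¬ r x y}
      ⟨τ, hτ, hrτ, le_rfl, hex⟩
    have hγsn : NoSnag Alg γ := fun f hf a b hab => hsn f hf a b (hγτ a b hab)
    obtain ⟨U, hU⟩ := exists_minSet hr hγ hrγ hγn (by
      intro μ hμ hrμ hμγ hμn
      by_contra hcon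
      exact hmin μ ⟨hμ, hrμ, le_trans hμγ hγτ, hμn⟩ (lt_of_le_not_ge hμγ hcon))
    refine .head ⟨hr, hγ, hβr, hrγ, hU.stronglyAbelian hr hγ hrγ hγsn⟩
      (ih γ (lt_of_le_not_ge hrγ ?_) hγ (le_trans hβr hrγ) hγτ)
    obtain ⟨x, y, h, hn⟩ := hγn
    exact fun h' => hn (h' x y h)
  exact key β hβ le_rfl hle

theorem stronglySolvable_of_chain {s : A → A → Prop}
    (h : Relation.ReflTransGen (Step Alg (fun a b => a = b)) (fun a b => a = b) s) :
    IsStronglySolvable Alg s := by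
  induction h with
  | refl => exact ⟨0, fun _ a b => a = b, rfl, rfl, fun _ => eq_isCongruence, fun i => i.elim0⟩
  | @tail r r' _ hs ih =>
    obtain ⟨n, c, h0, hl, hc, hstep⟩ := ih
    refine ⟨n + 1, Fin.snoc (α := fun _ => A → A → Prop) c r', ?_, ?_, ?_, ?_⟩
    · rw [← h0]; exact Fin.snoc_castSucc (α := fun _ => A → A → Prop) r' c 0
    · exact Fin.snoc_last _ _
    · intro i
      refine Fin.lastCases ?_ (fun i => ?_) i
      · rw [Fin.snoc_last]; exact hs.2.1
      · rw [Fin.snoc_castSucc]; exact hc i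
    · intro i
      refine Fin.lastCases ?_ (fun i => ?_) i
      · rw [Fin.snoc_castSucc, Fin.succ_last, Fin.snoc_last, hl]
        exact ⟨hs.2.2.2.1, hs.2.2.2.2⟩
      · rw [Fin.snoc_castSucc, Fin.succ_castSucc, Fin.snoc_castSucc]
        exact hstep i

/-- The image of a congruence `r` under a surjective homomorphism, computed through a section
`sec`; this is the intended relation when `r` contains the kernel. -/
def img (sec : B → A) (r : A → A → Prop) : B → B → Prop := fun p q => r (sec p) (sec q)

section image
variable {π : A → B} {sec : B → A} {β : A → A → Prop}

theorem img_cong (hπ : IsHom Alg AlgB π) (hsec : ∀ p, π (sec p) = p)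
    (hker : ∀ x y, π x = π y ↔ β x y) {r : A → A → Prop} (hr : IsCongruence Alg r)
    (hβr : ∀ x y, β x y → r x y) : IsCongruence AlgB (img sec r) := by
  refine ⟨⟨fun _ => hr.1.refl _, fun h => hr.1.symm h, fun h h' => hr.1.trans h h'⟩, ?_⟩
  intro o x y h
  have e : ∀ z : Fin (σ.arity o) → B,
      r (sec (AlgB.interp o z)) (Alg.interp o fun j => sec (z j)) := fun z => by
    refine hβr _ _ ((hker _ _).1 ?_)
    rw [hsec, hπ]
    exact congrArg _ (funext fun j => (hsec (z j)).symm)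
  exact hr.1.trans (e x) (hr.1.trans (hr.2 o _ _ h) (hr.1.symm (e y)))

theorem img_sec_eval (hπ : IsHom Alg AlgB π) (hsec : ∀ p, π (sec p) = p)
    (hker : ∀ x y, π x = π y ↔ β x y) {n m : ℕ} (t : Term σ (n + m)) (a : Fin n → B)
    (b : Fin m → B) : β (sec (t.eval AlgB (Fin.append a b)))
      (t.eval Alg (Fin.append (fun i => sec (a i)) (fun i => sec (b i)))) := by
  rw [← hker, hsec, eval_hom hπ]
  congr 1
  rw [comp_append]
  simp only [hsec]

theorem img_sa (hπ : IsHom Alg AlgB π) (hsec : ∀ p, π (sec p) = p)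
    (hker : ∀ x y, π x = π y ↔ β x y) {r r' : A → A → Prop} (hr : IsCongruence Alg r)
    (hβr : ∀ x y, β x y → r x y) (h : StronglyAbelianOver Alg r' r) :
    StronglyAbelianOver AlgB (img sec r') (img sec r) := by
  intro n m t a₁ a₂ b₁ b₂ b₃ ha hb hb' h₁
  have e := fun (a : Fin n → B) (b : Fin m → B) => hβr _ _ (img_sec_eval hπ hsec hker t a b)
  have := h n m t _ _ _ _ _ ha hb hb'
    (hr.1.trans (hr.1.symm (e _ _)) (hr.1.trans h₁ (e _ _)))
  exact hr.1.trans (e _ _) (hr.1.trans this (hr.1.symm (e _ _)))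

end image

/-- A finite algebra with a snag-free congruence `τ` that is not abelian over some smaller
congruence `β` has a quotient with a strongly solvable non-abelian congruence. -/
theorem exists_quotient [Finite A] {β τ : A → A → Prop} (hβ : IsCongruence Alg β)
    (hτ : IsCongruence Alg τ) (hle : ∀ x y, β x y → τ x y) (hsn : NoSnag Alg τ)
    (hn : ¬ TermCond Alg τ τ β) :
    ∃ (C : Type) (AlgC : UAlg σ C) (h : A → C), IsHom Alg AlgC h ∧ Function.Surjective h ∧
      ∃ τ : C → C → Prop, IsCongruence AlgC τ ∧ IsStronglySolvable AlgC τ ∧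
        ¬ TermCond AlgC τ τ (fun a b => a = b) := by
  let S : Setoid A := ⟨β, hβ.1⟩
  let sec : Quotient S → A := Quotient.out
  let π : A → Quotient S := Quotient.mk S
  have hsec : ∀ p, π (sec p) = p := Quotient.out_eq
  have hker : ∀ x y, π x = π y ↔ β x y := fun x y => Quotient.eq (r := S)
  let AlgC : UAlg σ (Quotient S) := ⟨fun o x => π (Alg.interp o fun j => sec (x j))⟩
  have hπ : IsHom Alg AlgC π := fun o x =>
    (hker _ _).2 (hβ.2 o _ _ fun j => (hker _ _).1 (hsec _).symm)
  have himg : img sec β = fun a b => a = b := by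
    funext p q
    refine propext ((hker _ _).symm.trans ?_)
    rw [hsec, hsec]
  refine ⟨_, AlgC, π, hπ, Quotient.mk_surjective, img sec τ, img_cong hπ hsec hker hτ hle, ?_, ?_⟩
  · refine stronglySolvable_of_chain ?_
    rw [← himg]
    refine (exists_chain hβ hτ hle hsn).lift (img sec) ?_
    rintro r r' ⟨hr, hr', hβr, hrr', hsa⟩
    exact ⟨img_cong hπ hsec hker hr hβr,
      img_cong hπ hsec hker hr' fun x y h => hrr' _ _ (hβr _ _ h),
      fun x y h => hβr _ _ h, fun x y h => hrr' _ _ h, img_sa hπ hsec hker hr hβr hsa⟩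
  · intro htc
    refine hn fun n m t a₁ a₂ b₁ b₂ ha hb h => ?_
    have hrel : ∀ x y, τ x y → img sec τ (π x) (π y) := fun x y hxy =>
      hτ.1.trans (hle _ _ ((hker _ _).1 (hsec _)))
        (hτ.1.trans hxy (hτ.1.symm (hle _ _ ((hker _ _).1 (hsec _)))))
    have e : ∀ (a : Fin n → A) (b : Fin m → A), π (t.eval Alg (Fin.append a b)) =
        t.eval AlgC (Fin.append (fun i => π (a i)) (fun i => π (b i))) := fun a b => by
      rw [eval_hom hπ, comp_append]
    rw [← hker, e, e] at h ⊢
    exact htc n m t _ _ _ _ (fun i => hrel _ _ (ha i)) (fun i => hrel _ _ (hb i)) h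

end chains

/-! ### The subalgebra of the square -/

section square
variable {σ : Signature} {A B : Type} {Alg : UAlg σ A} {AlgB : UAlg σ B} {ι D E : Type}

/-- Homomorphisms carry polynomials to polynomials. -/
theorem Pol.push {π : A → B} (hπ : IsHom Alg AlgB π) {g : ι → D → A} {g' : ι → E → B}
    (p : D → E) (hg : ∀ i d, π (g i d) = g' i (p d)) {f : D → A} (hf : Pol Alg g f) :
    ∃ f', Pol AlgB g' f' ∧ ∀ d, π (f d) = f' (p d) := by
  induction hf with
  | gen i => exact ⟨_, .gen i, hg i⟩
  | const c => exact ⟨_, .const (π c), fun _ => rfl⟩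
  | op o f _ ih =>
    choose f' hf' h using ih
    exact ⟨_, .op o f' hf', fun d => (hπ o _).trans (congrArg _ (funext fun j => h j d))⟩

/-- Snag-freeness passes to subdirect products of two factors. -/
theorem noSnag_pull {π₁ π₂ : A → B} (h₁ : IsHom Alg AlgB π₁) (h₂ : IsHom Alg AlgB π₂)
    (hinj : ∀ x y, π₁ x = π₁ y → π₂ x = π₂ y → x = y) {s : B → B → Prop} (hs : NoSnag AlgB s) :
    NoSnag Alg (fun x y => s (π₁ x) (π₁ y) ∧ s (π₂ x) (π₂ y)) := by
  intro f hf a b hab e₁ e₂ e₃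
  have key : ∀ π : A → B, IsHom Alg AlgB π → s (π a) (π b) → π a = π b := by
    intro π hπ h
    obtain ⟨f', hf', hff⟩ := hf.push hπ (g' := g2 B) (fun z => (π z.1, π z.2))
      (fun i d => by cases i <;> rfl)
    refine hs f' hf' _ _ h ?_ ?_ ?_
    · rw [← hff (a, b), e₁]
    · rw [← hff (b, a), e₂]
    · rw [← hff (b, b), e₃]
  exact hinj _ _ (key _ h₁ hab.1) (key _ h₂ hab.2)

/-- The syntactic congruence of `K` inside `τ`: the largest congruence below `τ` for which `K`
is a union of classes. -/
def syn (Alg : UAlg σ A) (τ : A → A → Prop) (K : A → Prop) : A → A → Prop :=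
  fun p q => τ p q ∧ ∀ P, Pol Alg (g1 A) P → (K (P p) ↔ K (P q))

theorem syn_cong {τ : A → A → Prop} (hτ : IsCongruence Alg τ) (K : A → Prop) :
    IsCongruence Alg (syn Alg τ K) := by
  refine cong_of_unary ⟨fun x => ⟨hτ.1.refl x, fun _ _ => Iff.rfl⟩,
    fun h => ⟨hτ.1.symm h.1, fun P hP => (h.2 P hP).symm⟩,
    fun h h' => ⟨hτ.1.trans h.1 h'.1, fun P hP => (h.2 P hP).trans (h'.2 P hP)⟩⟩ ?_
  intro f hf x y h
  exact ⟨hf.cong hτ fun _ => h.1, fun P hP => h.2 _ (hP.comp f fun _ => hf)⟩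

/-- A failure of the strong term condition for `s` over `θ` whose first block of arguments is the
pair `a₁, a₂`, in the form it takes when `s` is abelian over `θ`. -/
def Fail (Alg : UAlg σ A) (s θ : A → A → Prop) {I : Type} (a₁ a₂ : I → A) : Prop :=
  ∃ (J : Type) (b₁ b₂ : J → A) (f : (I → A) × (J → A) → A), Pol Alg (gIJ A I J) f ∧
    (∀ j, s (b₁ j) (b₂ j)) ∧ θ (f (a₁, b₁)) (f (a₂, b₂)) ∧ ¬ θ (f (a₁, b₁)) (f (a₁, b₂))

/-- No failure has a first block consisting of a single `δ`-related pair and second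
block `a₁, a₂`. -/
def Tame (Alg : UAlg σ A) (δ θ : A → A → Prop) {I : Type} (a₁ a₂ : I → A) : Prop :=
  ∀ (q : (Unit → A) × (I → A) → A), Pol Alg (gIJ A Unit I) q → ∀ c c' : A, δ c c' →
    θ (q (fun _ => c, a₁)) (q (fun _ => c', a₂)) → θ (q (fun _ => c, a₁)) (q (fun _ => c, a₂))

/-- The subalgebra of the square generated by the diagonal and the pairs `(a₁ i, a₂ i)`. -/
def gen2 (Alg : UAlg σ A) {I : Type} (a₁ a₂ : I → A) : Set (A × A) :=
  {p | ∃ k, Pol Alg (gI A I) k ∧ p = (k a₁, k a₂)}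

theorem gen2_sub {I : Type} (a₁ a₂ : I → A) : IsSubalgebra (UAlg.prod2 Alg Alg)
    (gen2 Alg a₁ a₂) := by
  intro o x hx
  choose k hk h using hx
  exact ⟨_, .op o k hk, by simp [UAlg.prod2, h]⟩

/-- The conclusion of the theorem. -/
def Concl (Alg : UAlg σ A) : Prop :=
  ∃ (sub : Set (A × A)) (hsub : IsSubalgebra (UAlg.prod2 Alg Alg) sub)
      (C : Type) (AlgC : UAlg σ C) (h : sub → C),
      IsHom (UAlg.sub (UAlg.prod2 Alg Alg) sub hsub) AlgC h ∧
      Function.Surjective h ∧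
      ∃ τ : C → C → Prop, IsCongruence AlgC τ ∧ IsStronglySolvable AlgC τ ∧
        ¬ TermCond AlgC τ τ (fun a b => a = b)

/-- The restriction of `s × s` to a subset of the square. -/
def sq (s : A → A → Prop) (S : Set (A × A)) : S → S → Prop :=
  fun p q => s p.1.1 q.1.1 ∧ s p.1.2 q.1.2

theorem sq_cong {s : A → A → Prop} (hs : IsCongruence Alg s) {S : Set (A × A)}
    (hS : IsSubalgebra (UAlg.prod2 Alg Alg) S) :
    IsCongruence (UAlg.sub (UAlg.prod2 Alg Alg) S hS) (sq s S) :=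
  ⟨⟨fun _ => ⟨hs.1.refl _, hs.1.refl _⟩, fun h => ⟨hs.1.symm h.1, hs.1.symm h.2⟩,
    fun h h' => ⟨hs.1.trans h.1 h'.1, hs.1.trans h.2 h'.2⟩⟩,
    fun o _ _ h => ⟨hs.2 o _ _ fun i => (h i).1, hs.2 o _ _ fun i => (h i).2⟩⟩

theorem sq_noSnag {s : A → A → Prop} (hs : NoSnag Alg s) {S : Set (A × A)}
    (hS : IsSubalgebra (UAlg.prod2 Alg Alg) S) :
    NoSnag (UAlg.sub (UAlg.prod2 Alg Alg) S hS) (sq s S) :=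
  noSnag_pull (AlgB := Alg) (π₁ := fun p : S => p.1.1) (π₂ := fun p : S => p.1.2)
    (fun _ _ => rfl) (fun _ _ => rfl) (fun _ _ h h' => Subtype.ext (Prod.ext h h')) hs

/-- If `s` is not abelian over some congruence `θ` below it, the square itself works. -/
theorem concl_of_not_abelian [Finite A] {s θ : A → A → Prop} (hs : IsCongruence Alg s)
    (hsn : NoSnag Alg s) (hθ : IsCongruence Alg θ) (hle : ∀ x y, θ x y → s x y)
    (hn : ¬ TermCond Alg s s θ) : Concl Alg := by
  have hU : IsSubalgebra (UAlg.prod2 Alg Alg) Set.univ := fun _ _ _ => Set.mem_univ _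
  refine ⟨Set.univ, hU, exists_quotient (sq_cong hθ hU) (sq_cong hs hU)
    (fun _ _ h => ⟨hle _ _ h.1, hle _ _ h.2⟩) (sq_noSnag hsn hU) fun htc => hn ?_⟩
  intro n m t a₁ a₂ b₁ b₂ ha hb h
  let d : A → (Set.univ : Set (A × A)) := fun x => ⟨(x, x), Set.mem_univ _⟩
  have hd : IsHom Alg (UAlg.sub (UAlg.prod2 Alg Alg) Set.univ hU) d := fun _ _ => rfl
  have e : ∀ (a : Fin n → A) (b : Fin m → A), d (t.eval Alg (Fin.append a b)) =
      t.eval _ (Fin.append (fun i => d (a i)) (fun i => d (b i))) := fun a b => by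
    rw [eval_hom hd, comp_append]
  have := htc n m t (fun i => d (a₁ i)) (fun i => d (a₂ i)) (fun i => d (b₁ i))
    (fun i => d (b₂ i)) (fun i => ⟨ha i, ha i⟩) (fun i => ⟨hb i, hb i⟩)
    (by rw [← e, ← e]; exact ⟨h, h⟩)
  rw [← e, ← e] at this
  exact this.1

/-- A unary polynomial of `gen2` acts on the two coordinates by one polynomial `q (·, a)` of the
base algebra, with parameters `a = a₁` on the left and `a = a₂` on the right. -/
theorem gen2_unary {I : Type} {a₁ a₂ : I → A}
    {P : gen2 Alg a₁ a₂ → gen2 Alg a₁ a₂}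
    (hP : Pol (UAlg.sub (UAlg.prod2 Alg Alg) _ (gen2_sub a₁ a₂)) (g1 _) P) :
    ∃ q, Pol Alg (gIJ A Unit I) q ∧ ∀ p, (P p).1 =
      (q (fun _ => p.1.1, a₁), q (fun _ => p.1.2, a₂)) := by
  induction hP with
  | gen i => exact ⟨_, .gen (.inl ()), fun _ => rfl⟩
  | const c =>
    obtain ⟨k, hk, h⟩ := c.2
    exact ⟨_, hk.comp Prod.snd fun i => .gen (g := gIJ A Unit I) (.inr i), fun _ => h⟩
  | op o f _ ih =>
    choose q hq h using ih
    refine ⟨_, .op o q hq, fun p => ?_⟩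
    simp only [UAlg.sub, UAlg.prod2, h]

/-- Every polynomial of `A` acts coordinatewise on the subalgebra `gen2`, because constants lie
on the diagonal. -/
theorem gen2_lift {I : Type} {a₁ a₂ : I → A} {g : ι → D → A} {g' : ι → E → gen2 Alg a₁ a₂}
    {p₁ p₂ : E → D} (hg : ∀ i e, (g' i e).1 = (g i (p₁ e), g i (p₂ e))) {f : D → A}
    (hf : Pol Alg g f) :
    ∃ f', Pol (UAlg.sub (UAlg.prod2 Alg Alg) _ (gen2_sub a₁ a₂)) g' f' ∧
      ∀ e, (f' e).1 = (f (p₁ e), f (p₂ e)) := by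
  induction hf with
  | gen i => exact ⟨_, .gen i, hg i⟩
  | const c => exact ⟨_, .const ⟨(c, c), _, .const c, rfl⟩, fun _ => rfl⟩
  | op o f _ ih =>
    choose f' hf' h using ih
    refine ⟨_, .op o f' hf', fun e => ?_⟩
    simp only [UAlg.sub, UAlg.prod2, h]

/-- The main construction. The syntactic congruence of `{p | p ≡ (c₁, c₁) mod θ × θ}` identifies
`(f (a₁, b₁), f (a₂, b₁))` with `(f (a₁, b₂), f (a₂, b₂))` but isolates `(c₁, c₁)`, where
`c₁ = f (a₁, b₁)`. -/
theorem concl_of_fail [Finite A] {s δ θ : A → A → Prop} (hs : IsCongruence Alg s)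
    (hsn : NoSnag Alg s) (hδ : IsCongruence Alg δ) (hθ : IsCongruence Alg θ)
    (hθδ : ∀ x y, θ x y → δ x y)
    (hsa : StronglyAbelianOver Alg s δ) (htc : TermCond Alg s s θ) {I : Type} {a₁ a₂ : I → A}
    (ha : ∀ i, s (a₁ i) (a₂ i)) (hF : Fail Alg s θ a₁ a₂) (hN : Tame Alg δ θ a₁ a₂)
    (hN' : Tame Alg δ θ a₂ a₁) : Concl Alg := by
  obtain ⟨J, b₁, b₂, f, hf, hb, h₁, h₂⟩ := hF
  have hsr : ∀ x, s x x := fun _ => hs.1.refl _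
  have d₁ : δ (f (a₁, b₁)) (f (a₂, b₁)) := by
    refine hf.sa hsr hsa (d₁ := (a₁, b₁)) (d₂ := (a₂, b₂)) (fun i => ?_) (hθδ _ _ h₁)
    rcases i with i | j
    · exact .inl ⟨rfl, rfl, ha i⟩
    · exact .inr ⟨rfl, hb j, hs.1.symm (hb j)⟩
  have d₂ : δ (f (a₁, b₂)) (f (a₂, b₂)) := by
    refine hf.sa hsr hsa (d₁ := (a₁, b₁)) (d₂ := (a₂, b₂)) (fun i => ?_) (hθδ _ _ h₁)
    rcases i with i | j
    · exact .inl ⟨rfl, rfl, ha i⟩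
    · exact .inr ⟨rfl, hb j, hsr _⟩
  -- The two applications of the term condition, to `(a, b) ↦ q (f (a, b), a)`.
  have hR : ∀ q, Pol Alg (gIJ A Unit I) q → Pol Alg (gIJ A I J)
      (fun z : (I → A) × (J → A) => q (fun _ => f z, z.1)) := fun q hq =>
    hq.comp (fun z : (I → A) × (J → A) => (fun _ => f z, z.1)) fun i => by
      rcases i with i | i
      · exact hf
      · exact .gen (g := gIJ A I J) (.inl i)
  have tc : ∀ q, Pol Alg (gIJ A Unit I) q →
      (θ (q (fun _ => f (a₁, b₁), a₁)) (q (fun _ => f (a₂, b₁), a₂)) ↔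
        θ (q (fun _ => f (a₁, b₂), a₁)) (q (fun _ => f (a₂, b₂), a₂))) := by
    intro q hq
    constructor
    · refine (hR q hq).tc hsr hsr htc (d₁ := (a₁, b₁)) (d₂ := (a₂, b₁)) (d₃ := (a₁, b₂))
        (d₄ := (a₂, b₂)) fun i => ?_
      rcases i with i | j
      · exact .inr ⟨rfl, rfl, ha i⟩
      · exact .inl ⟨rfl, rfl, hb j⟩
    · refine (hR q hq).tc hsr hsr htc (d₁ := (a₁, b₂)) (d₂ := (a₂, b₂)) (d₃ := (a₁, b₁))
        (d₄ := (a₂, b₁)) fun i => ?_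
      rcases i with i | j
      · exact .inr ⟨rfl, rfl, ha i⟩
      · exact .inl ⟨rfl, rfl, hs.1.symm (hb j)⟩
  have hq₁ : ∀ q, Pol Alg (gIJ A Unit I) q → ∀ x y, θ x y → ∀ a : I → A,
      θ (q (fun _ => x, a)) (q (fun _ => y, a)) := fun q hq x y h a =>
    hq.cong hθ fun i => by
      rcases i with i | i
      · exact h
      · exact hθ.1.refl _
  have tr : ∀ {x y z}, θ x y → θ y z → θ x z := fun h h' => hθ.1.trans h h'
  have sy : ∀ {x y}, θ x y → θ y x := fun h => hθ.1.symm h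
  have hC := gen2_sub (Alg := Alg) a₁ a₂
  let K : gen2 Alg a₁ a₂ → Prop := fun p => θ p.1.1 (f (a₁, b₁)) ∧ θ p.1.2 (f (a₁, b₁))
  have hmem : ∀ b : J → A, (f (a₁, b), f (a₂, b)) ∈ gen2 Alg a₁ a₂ := fun b =>
    ⟨_, hf.comp (fun a : I → A => (a, b)) fun i => by
      rcases i with i | j
      · exact .gen (g := gI A I) i
      · exact .const _, rfl⟩
  have hdiag : ∀ x, (x, x) ∈ gen2 Alg a₁ a₂ := fun x => ⟨_, .const x, rfl⟩
  have hβ : syn (UAlg.sub (UAlg.prod2 Alg Alg) _ hC) (sq s _) K ⟨_, hmem b₁⟩ ⟨_, hmem b₂⟩ := by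
    have hsf : ∀ a : I → A, s (f (a, b₁)) (f (a, b₂)) := fun a => hf.cong hs fun i => by
      rcases i with i | j
      · exact hsr _
      · exact hb j
    refine ⟨⟨hsf _, hsf _⟩, fun P hP => ?_⟩
    obtain ⟨q, hq, hqP⟩ := gen2_unary hP
    show (θ _ _ ∧ θ _ _) ↔ (θ _ _ ∧ θ _ _)
    rw [hqP, hqP]
    dsimp only
    constructor
    · rintro ⟨e₁, e₂⟩
      have e₃ := tr e₁ (sy e₂)
      have e₄ := (tc q hq).1 e₃
      have e₅ := hN q hq _ _ d₁ e₃
      have e₆ := tr (hq₁ q hq _ _ (sy h₁) a₂) (tr (sy e₅) e₁)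
      exact ⟨tr e₄ e₆, e₆⟩
    · rintro ⟨e₁, e₂⟩
      have e₃ := tr e₁ (sy e₂)
      have e₄ := (tc q hq).2 e₃
      have e₅ := hN' q hq _ _ (hδ.1.symm d₂) (sy e₃)
      have e₆ := tr (hq₁ q hq _ _ h₁ a₁) (tr (sy e₅) e₂)
      exact ⟨e₆, tr (sy e₄) e₆⟩
  refine ⟨_, hC, exists_quotient (syn_cong (sq_cong hs hC) K) (sq_cong hs hC)
    (fun _ _ h => h.1) (sq_noSnag hsn hC) fun hab => h₂ ?_⟩
  obtain ⟨F, hF, hFe⟩ := gen2_lift (Alg := Alg) (a₁ := a₁) (a₂ := a₂)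
    (g' := gIJ (gen2 Alg a₁ a₂) I J)
    (p₁ := fun z => (fun i => (z.1 i).1.1, fun j => (z.2 j).1.1))
    (p₂ := fun z => (fun i => (z.1 i).1.2, fun j => (z.2 j).1.2))
    (fun i e => by rcases i with i | j <;> rfl) hf
  let A₁ : I → gen2 Alg a₁ a₂ := fun i => ⟨_, _, .gen i, rfl⟩
  let A₀ : I → gen2 Alg a₁ a₂ := fun i => ⟨_, hdiag (a₁ i)⟩
  let B₁ : J → gen2 Alg a₁ a₂ := fun j => ⟨_, hdiag (b₁ j)⟩
  let B₂ : J → gen2 Alg a₁ a₂ := fun j => ⟨_, hdiag (b₂ j)⟩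
  have hsqr := (sq_cong hs hC).1.refl
  have e₁ : F (A₁, B₁) = ⟨_, hmem b₁⟩ := Subtype.ext (hFe _)
  have e₂ : F (A₁, B₂) = ⟨_, hmem b₂⟩ := Subtype.ext (hFe _)
  have e₃ : F (A₀, B₁) = ⟨_, hdiag (f (a₁, b₁))⟩ := Subtype.ext (hFe _)
  have e₄ : F (A₀, B₂) = ⟨_, hdiag (f (a₁, b₂))⟩ := Subtype.ext (hFe _)
  have := hF.tc hsqr hsqr hab (d₁ := (A₁, B₁)) (d₂ := (A₁, B₂)) (d₃ := (A₀, B₁))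
    (d₄ := (A₀, B₂)) (fun i => by
      rcases i with i | j
      · exact .inl ⟨rfl, rfl, hsr _, hs.1.symm (ha i)⟩
      · exact .inr ⟨rfl, rfl, hb j, hb j⟩) (by rw [e₁, e₂]; exact hβ)
  rw [e₃, e₄] at this
  exact sy ((this.2 _ (.gen (g := g1 _) ())).1 ⟨hθ.1.refl _, hθ.1.refl _⟩).1

/-- If `s` is abelian over `θ` but not strongly abelian over it, and a suitable `δ` lies between
them, then `concl_of_fail` applies to a well-chosen failure: one with `δ`-related first block
if there is any, and an arbitrary one otherwise. -/
theorem concl_of_step [Finite A] {s δ θ : A → A → Prop} (hs : IsCongruence Alg s)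
    (hsn : NoSnag Alg s) (hδ : IsCongruence Alg δ) (hθ : IsCongruence Alg θ)
    (hθδ : ∀ x y, θ x y → δ x y) (hδs : ∀ x y, δ x y → s x y)
    (hsa : StronglyAbelianOver Alg s δ) (hsa' : StronglyAbelianOver Alg δ θ)
    (hn : ¬ StronglyAbelianOver Alg s θ) : Concl Alg := by
  by_cases htc : TermCond Alg s s θ
  swap
  · exact concl_of_not_abelian hs hsn hθ (fun _ _ h => hδs _ _ (hθδ _ _ h)) htc
  have hsr : ∀ x, s x x := fun _ => hs.1.refl _
  have hδr : ∀ x, δ x x := fun _ => hδ.1.refl _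
  by_cases hex : ∃ (I : Type) (a₁ a₂ : I → A), (∀ i, δ (a₁ i) (a₂ i)) ∧ Fail Alg s θ a₁ a₂
  · obtain ⟨I, a₁, a₂, ha, hF⟩ := hex
    have hN : ∀ a₁ a₂ : I → A, (∀ i, δ (a₁ i) (a₂ i)) → Tame Alg δ θ a₁ a₂ := by
      intro a₁ a₂ ha q hq c c' hc
      refine hq.sa hδr hsa' (d₁ := (fun _ => c, a₁)) (d₂ := (fun _ => c', a₂))
        (d₃ := (fun _ => c, a₁)) (d₄ := (fun _ => c, a₂)) fun i => ?_
      rcases i with i | i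
      · exact .inr ⟨rfl, hc, hδ.1.symm hc⟩
      · exact .inl ⟨rfl, rfl, ha i⟩
    exact concl_of_fail hs hsn hδ hθ hθδ hsa htc (fun i => hδs _ _ (ha i)) hF (hN _ _ ha)
      (hN _ _ fun i => hδ.1.symm (ha i))
  · have hN : ∀ {I : Type} (a₁ a₂ : I → A), (∀ i, s (a₁ i) (a₂ i)) → Tame Alg δ θ a₁ a₂ := by
      intro I a₁ a₂ ha q hq c c' hc h
      by_contra hcon
      exact hex ⟨Unit, fun _ => c, fun _ => c', fun _ => hc, I, a₁, a₂, q, hq, ha, h, hcon⟩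
    unfold StronglyAbelianOver at hn
    push Not at hn
    obtain ⟨n, m, t, a₁, a₂, b₁, b₂, b₃, ha, hb, hb', h₁, h₂⟩ := hn
    have hf : Pol Alg (gIJ A (Fin n) (Fin m))
        (fun z : (Fin n → A) × (Fin m → A) => t.eval Alg (Fin.append z.1 z.2)) :=
      .term (g := gIJ A (Fin n) (Fin m)) (v := fun i z => Fin.append z.1 z.2 i) t fun i => by
        refine Fin.addCases (fun i => ?_) (fun i => ?_) i
        · simp only [Fin.append_left]
          exact .gen (g := gIJ A (Fin n) (Fin m)) (.inl i)
        · simp only [Fin.append_right]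
          exact .gen (g := gIJ A (Fin n) (Fin m)) (.inr i)
    refine concl_of_fail hs hsn hδ hθ hθδ hsa htc ha ⟨Fin m, b₁, b₂, _, hf, hb, h₁, fun h₃ => ?_⟩
      (hN _ _ ha) (hN _ _ fun i => hs.1.symm (ha i))
    -- Otherwise the term condition carries `t (a₁, b₂) ≡ t (a₂, b₂)` over to `b₃`.
    refine h₂ (hf.tc hsr hsr htc (d₁ := (a₁, b₂)) (d₂ := (a₂, b₂)) (d₃ := (a₁, b₃))
      (d₄ := (a₂, b₃)) (fun i => ?_) (hθ.1.trans (hθ.1.symm h₃) h₁))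
    rcases i with i | j
    · exact .inr ⟨rfl, rfl, ha i⟩
    · exact .inl ⟨rfl, rfl, hb' j⟩

/-- Along the chain of strongly abelian steps, `s` is strongly abelian over the top but not over
equality, so there is a step `θ ≤ δ` at which strong abelianness of `s` is lost. -/
theorem concl [Finite A] {s : A → A → Prop} (hs : IsCongruence Alg s)
    (hsolv : IsStronglySolvable Alg s) (hn : ¬ StronglyAbelianOver Alg s (fun a b => a = b)) :
    Concl Alg := by
  have hsn := noSnag_of_chain hsolv
  obtain ⟨n, c, h0, hl, hc, hstep⟩ := hsolv
  have hle : ∀ i : Fin (n + 1), ∀ x y, c i x y → s x y := by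
    intro i
    induction i using Fin.reverseInduction with
    | last => rw [hl]; exact fun _ _ h => h
    | cast i ih => exact fun x y h => ih x y ((hstep i).1 x y h)
  by_contra hcon
  have key : ∀ i : Fin (n + 1), StronglyAbelianOver Alg s (c i) := by
    intro i
    induction i using Fin.reverseInduction with
    | last =>
      rw [hl]
      exact fun n m t a₁ a₂ b₁ b₂ b₃ ha _ _ _ => eval_cong hs t (rel_append ha fun _ => hs.1.refl _)
    | cast i ih =>
      by_contra hni
      exact hcon (concl_of_step hs hsn (hc i.succ) (hc i.castSucc) (hstep i).1 (hle _) ih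
        (hstep i).2 hni)
  exact hn (h0 ▸ key 0)

end square

end HSSq

/-- If a finite algebra F has a strongly solvable congruence that is
abelian but not strongly abelian, then HS(F²) contains an algebra with a strongly
solvable congruence that is not abelian. -/
theorem stmt_16 {σ : Signature} {F : Type} [Fintype F] (Alg : UAlg σ F)
    (s : F → F → Prop) (hs : IsCongruence Alg s)
    (hsolv : IsStronglySolvable Alg s)
    (habel : TermCond Alg s s (fun a b => a = b))
    (hnSA : ¬ StronglyAbelianOver Alg s (fun a b => a = b)) :
    ∃ (sub : Set (F × F)) (hsub : IsSubalgebra (UAlg.prod2 Alg Alg) sub)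
      (C : Type) (AlgC : UAlg σ C) (h : sub → C),
      IsHom (UAlg.sub (UAlg.prod2 Alg Alg) sub hsub) AlgC h ∧
      Function.Surjective h ∧
      ∃ τ : C → C → Prop, IsCongruence AlgC τ ∧ IsStronglySolvable AlgC τ ∧
        ¬ TermCond AlgC τ τ (fun a b => a = b) := by
  exact HSSq.concl hs hsolv hnSA
end
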